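/- There is an absolute constant C such that for all integers n ≥ 2 and f ≥ 1 there exists a decoder function D (depending only on n and f) with the following property: for every finite simple graph G = (V,E) on n vertices there exists a labeling function L_V : V → {0,1}^b with b ≤ C·f⁴·(log₂ n)⁷, such that for all s,t ∈ V and all fault sets F ⊆ V ∖ {s,t} with |F| ≤ f, D applied to (L_V(s), L_V(t), {L_V(v) : v ∈ F}) outputs true if and only if s and t lie in the same connected component of the induced subgraph G − F on V ∖ F. -/

import Mathlib

namespace VF
open Finset
open scoped Classical

/-- `G` with the vertices of `X` made isolated. -/
def rs {V : Type} (G : SimpleGraph V) (X : Finset V) : SimpleGraph V where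
  Adj u v := G.Adj u v ∧ u ∉ X ∧ v ∉ X
  symm := ⟨fun _ _ h => ⟨h.1.symm, h.2.2, h.2.1⟩⟩
  loopless := ⟨fun _ h => h.1.ne rfl⟩

/-- number of components of `G - X` meeting `U`. -/
noncomputable def cc {V : Type} (G : SimpleGraph V) (U X : Finset V) : ℕ :=
  ((U \ X).image (fun v => (rs G X).connectedComponentMk v)).card

theorem rs_mono {V : Type} (G : SimpleGraph V) {X Y : Finset V} (h : X ⊆ Y) :
    rs G Y ≤ rs G X := by
  intro u v huv
  exact ⟨huv.1, fun hx => huv.2.1 (h hx), fun hx => huv.2.2 (h hx)⟩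

theorem cc_le {V : Type} (G : SimpleGraph V) (U X : Finset V) : cc G U X ≤ U.card :=
  card_image_le.trans (card_le_card sdiff_subset)

theorem cc_mono {V : Type} (G : SimpleGraph V) {U U' : Finset V} (X : Finset V) (h : U ⊆ U') :
    cc G U X ≤ cc G U' X :=
  card_le_card (image_subset_image (sdiff_subset_sdiff h (Subset.refl _)))

theorem card_image_factor {α β γ : Type} (T : Finset α) (f : α → β) (g : α → γ)
    (h : ∀ x ∈ T, ∀ y ∈ T, g x = g y → f x = f y) : (T.image f).card ≤ (T.image g).card := by
  have : ∀ b : T.image f, ∃ c : T.image g, ∃ x ∈ T, f x = b ∧ g x = c := by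
    rintro ⟨b, hb⟩
    obtain ⟨x, hx, rfl⟩ := mem_image.1 hb
    exact ⟨⟨g x, mem_image_of_mem _ hx⟩, x, hx, rfl, rfl⟩
  choose φ hφ using this
  have hinj : Function.Injective φ := by
    intro b b' hbb
    obtain ⟨x, hx, h1, h2⟩ := hφ b
    obtain ⟨y, hy, h3, h4⟩ := hφ b'
    apply Subtype.ext
    rw [← h1, ← h3]
    exact h x hx y hy (by rw [h2, h4, hbb])
  simpa using Fintype.card_le_of_injective φ hinj

theorem cc_add_le {V : Type} (G : SimpleGraph V) (U Y X : Finset V) :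
    cc G U Y ≤ cc G (U ∪ X) (Y ∪ X) + X.card := by
  have h1 : cc G U Y ≤ (((U \ Y) \ X).image (fun v => (rs G Y).connectedComponentMk v)).card
      + X.card := by
    unfold cc
    calc _ ≤ (((U \ Y) \ X).image (fun v => (rs G Y).connectedComponentMk v) ∪
          X.image (fun v => (rs G Y).connectedComponentMk v)).card := by
            rw [← image_union]
            apply card_le_card
            apply image_subset_image
            intro v hv
            by_cases hx : v ∈ X <;> simp [hx]
            simpa using hv
      _ ≤ _ := (card_union_le _ _).trans (by gcongr; exact card_image_le)
  refine h1.trans (Nat.add_le_add_right ?_ _)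
  refine (card_image_factor _ _ (fun v => (rs G (Y ∪ X)).connectedComponentMk v) ?_).trans ?_
  · intro x _ y _ hxy
    simp only [SimpleGraph.ConnectedComponent.eq] at hxy ⊢
    exact hxy.mono (rs_mono G subset_union_left)
  · unfold cc
    apply card_le_card
    apply image_subset_image
    intro v hv
    simp only [mem_sdiff, mem_union] at hv ⊢
    tauto

def Adm {V : Type} [Fintype V] (p : ℕ) (D : ℕ → Finset V) : Prop :=
  D 0 = univ ∧ Antitone D ∧ D p = ∅

noncomputable def trm {V : Type} (G : SimpleGraph V) (D : ℕ → Finset V) (i : ℕ) : ℤ :=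
  2 ^ i * ((cc G (D i) (D (i+1)) : ℤ) - 12 * ((D (i+1)).card : ℤ))

theorem exists_max {V : Type} [Fintype V] (G : SimpleGraph V) (p : ℕ) (hp : 1 ≤ p) :
    ∃ D, Adm p D ∧ ∀ D', Adm p D' → ∑ i ∈ range p, trm G D' i ≤ ∑ i ∈ range p, trm G D i := by
  obtain ⟨m, ⟨D, hD, rfl⟩, hm⟩ := Int.exists_greatest_of_bdd
    (P := fun z => ∃ D, Adm p D ∧ ∑ i ∈ range p, trm G D i = z)
    ⟨∑ i ∈ range p, 2 ^ i * (Fintype.card V : ℤ), by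
      rintro z ⟨D, hD, rfl⟩
      apply sum_le_sum
      intro i _
      unfold trm
      apply mul_le_mul_of_nonneg_left _ (by positivity)
      have := (cc_le G (D i) (D (i+1))).trans (card_le_univ _)
      omega⟩
    ⟨_, fun i => if i = 0 then univ else ∅, ⟨by simp, by
      intro i j hij
      by_cases hj : j = 0
      · have : i = 0 := by omega
        simp [hj, this]
      · simp [hj], by simp; omega⟩, rfl⟩
  exact ⟨D, hD, fun D' hD' => hm _ ⟨D', hD', rfl⟩⟩

theorem drop_move {V : Type} [Fintype V] (G : SimpleGraph V) (p : ℕ)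
    (D : ℕ → Finset V) (hD : Adm p D)
    (hm : ∀ D', Adm p D' → ∑ i ∈ range p, trm G D' i ≤ ∑ i ∈ range p, trm G D i)
    (i : ℕ) (hi : i + 1 < p) :
    12 * (D (i+1)).card ≤ 3 * (D i).card + 12 * (D (i+2)).card := by
  set D' : ℕ → Finset V := fun j => if j = i + 1 then D (i+2) else D j with hD'
  have hA : Adm p D' := by
    refine ⟨by simp [hD', hD.1], ?_, by
      simp only [hD']; rw [if_neg (by omega)]; exact hD.2.2⟩
    apply antitone_nat_of_succ_le
    intro j
    simp only [hD']
    by_cases h1 : j = i + 1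
    · subst h1; simp
    · by_cases h2 : j = i
      · subst h2; simp; exact hD.2.1 (by omega)
      · rw [if_neg (by omega), if_neg h1]; exact hD.2.1 (by omega)
  have h := hm D' hA
  rw [← sub_nonneg, ← sum_sub_distrib, sum_eq_add i (i+1) (by omega)] at h
  rotate_left
  · intro c _ hc
    simp only [trm, hD']
    rw [if_neg (by omega), if_neg (by omega), sub_self]
  · intro h; simp at h; omega
  · intro h; simp at h; omega
  simp only [trm, hD'] at h
  rw [if_neg (show ¬ i = i + 1 by omega), if_neg (show ¬ i + 1 + 1 = i + 1 by omega), if_pos trivial] at h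
  have e1 := cc_le G (D i) (D (i+1))
  have e2 := cc_le G (D (i+1)) (D (i+1+1))
  have e3 := card_le_card (hD.2.1 (show i ≤ i + 1 by omega))
  have e4 : cc G (D (i+2)) (D (i+1+1)) = 0 := by simp [cc]
  rw [e4] at h
  have h2 : (0:ℤ) ≤ 2 ^ i * (3 * (D i).card + 12 * (D (i+2)).card - 12 * (D (i+1)).card) := by
    refine h.trans ?_
    have : (0:ℤ) < 2 ^ i := by positivity
    rw [pow_succ, mul_assoc, mul_assoc, ← mul_sub, ← mul_sub, ← mul_sub, ← mul_add]
    apply mul_le_mul_of_nonneg_left _ this.le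
    push_cast
    simp only [show i + 1 + 1 = i + 2 from rfl] at *
    omega
  have := nonneg_of_mul_nonneg_right h2 (by positivity)
  omega

theorem add_move {V : Type} [Fintype V] (G : SimpleGraph V) (p : ℕ)
    (D : ℕ → Finset V) (hD : Adm p D)
    (hm : ∀ D', Adm p D' → ∑ i ∈ range p, trm G D' i ≤ ∑ i ∈ range p, trm G D i)
    (i : ℕ) (hi : i + 1 < p) (X : Finset V) :
    cc G (D i) (D (i+1) ∪ X) ≤ cc G (D i) (D (i+1)) + 25 * X.card := by
  set D' : ℕ → Finset V := fun j => if j ≤ i + 1 then D j ∪ X else D j with hD'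
  have hA : Adm p D' := by
    refine ⟨by simp [hD', hD.1], ?_, by
      simp only [hD']; rw [if_neg (by omega)]; exact hD.2.2⟩
    apply antitone_nat_of_succ_le
    intro j
    have := hD.2.1 (show j ≤ j + 1 by omega)
    simp only [hD']
    by_cases h1 : j + 1 ≤ i + 1
    · rw [if_pos h1, if_pos (by omega)]
      exact union_subset_union_left this
    · rw [if_neg h1]
      split_ifs
      · exact this.trans subset_union_left
      · exact this
  have hx : ∀ j, ((D j ∪ X).card : ℤ) ≤ (D j).card + X.card := by
    intro j; exact_mod_cast card_union_le _ _
  have h := hm D' hA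
  have hlow : ∀ j ∈ range i, trm G D j - 2 ^ j * (13 * X.card) ≤ trm G D' j := by
    intro j hj
    rw [mem_range] at hj
    simp only [trm, hD']
    rw [if_pos (by omega), if_pos (by omega), ← mul_sub]
    apply mul_le_mul_of_nonneg_left _ (by positivity)
    have e := cc_add_le G (D j) (D (j+1)) X
    have := hx (j+1)
    push_cast [← Int.ofNat_le] at e
    linarith
  have hhi : ∀ j ∈ Ico (i+1) p, trm G D j ≤ trm G D' j := by
    intro j hj
    rw [mem_Ico] at hj
    simp only [trm, hD']
    rw [if_neg (show ¬ j + 1 ≤ i + 1 by omega)]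
    apply mul_le_mul_of_nonneg_left _ (by positivity)
    have : cc G (D j) (D (j+1)) ≤ cc G (if j ≤ i + 1 then D j ∪ X else D j) (D (j+1)) := by
      apply cc_mono
      split_ifs
      · exact subset_union_left
      · exact Subset.refl _
    omega
  have hmid : 2 ^ i * ((cc G (D i) (D (i+1) ∪ X) : ℤ) - 12 * (D (i+1)).card - 12 * X.card)
      ≤ trm G D' i := by
    simp only [trm, hD']
    rw [if_pos (by omega), if_pos (by omega)]
    apply mul_le_mul_of_nonneg_left _ (by positivity)
    have := cc_mono G (D (i+1) ∪ X) (show D i ⊆ D i ∪ X from subset_union_left)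
    have := hx (i+1)
    omega
  have s1 := sum_le_sum hlow
  have s2 := sum_le_sum hhi
  rw [sum_sub_distrib, ← sum_mul] at s1
  have hgeo : (∑ j ∈ range i, (2:ℤ) ^ j) ≤ 2 ^ i := by
    have := Nat.geomSum_eq (le_refl 2) i
    have h3 : (∑ j ∈ range i, 2 ^ j : ℕ) ≤ 2 ^ i := by rw [this]; simp
    exact_mod_cast h3
  have hs : ∀ g : ℕ → ℤ, ∑ j ∈ range p, g j = ∑ j ∈ range i, g j + g i + ∑ j ∈ Ico (i+1) p, g j := by
    intro g
    rw [← sum_range_succ, sum_range_add_sum_Ico _ hi.le]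
  rw [hs, hs] at h
  have hg2 := mul_le_mul_of_nonneg_right hgeo (show (0:ℤ) ≤ 13 * X.card by positivity)
  have hti : trm G D i = 2 ^ i * ((cc G (D i) (D (i+1)) : ℤ) - 12 * ((D (i+1)).card : ℤ)) := rfl
  have hfin : (0:ℤ) ≤ 2 ^ i * (cc G (D i) (D (i+1)) + 25 * X.card - cc G (D i) (D (i+1) ∪ X)) := by
    linarith
  have := nonneg_of_mul_nonneg_right hfin (by positivity)
  omega

theorem hierarchy {V : Type} [Fintype V] (G : SimpleGraph V) (q : ℕ)
    (hq : Fintype.card V < 2 ^ q) :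
    ∃ D : ℕ → Finset V, D 0 = univ ∧ Antitone D ∧ D q = ∅ ∧
      ∀ i X, cc G (D i) (D (i+1) ∪ X) ≤ cc G (D i) (D (i+1)) + 25 * X.card := by
  obtain ⟨D, hD, hm⟩ := exists_max G (q+1) (by omega)
  have hhalf : ∀ k i, i + k = q → 2 * (D (i+1)).card ≤ (D i).card := by
    intro k
    induction k with
    | zero =>
      intro i hi
      have : D (i+1) = ∅ := by
        have := hD.2.2
        rw [← hi] at this; exact this
      simp [this]
    | succ k ih =>
      intro i hi
      have h1 := drop_move G (q+1) D hD hm i (by omega)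
      have h2 := ih (i+1) (by omega)
      simp only [show i + 1 + 1 = i + 2 from rfl] at *
      omega
  have hpow : ∀ i, i ≤ q → 2 ^ i * (D i).card ≤ Fintype.card V := by
    intro i
    induction i with
    | zero => intro _; simpa using card_le_univ _
    | succ i ih =>
      intro hi
      have h1 := hhalf (q - i) i (by omega)
      calc 2 ^ (i+1) * (D (i+1)).card = 2 ^ i * (2 * (D (i+1)).card) := by ring
        _ ≤ 2 ^ i * (D i).card := Nat.mul_le_mul_left _ h1
        _ ≤ _ := ih (by omega)
  have h0 : D q = ∅ := by
    have := hpow q le_rfl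
    by_contra hne
    have : 1 ≤ (D q).card := card_pos.2 (nonempty_iff_ne_empty.2 hne)
    nlinarith
  refine ⟨D, hD.1, hD.2.1, h0, ?_⟩
  intro i X
  by_cases hi : i + 1 < q + 1
  · exact add_move G (q+1) D hD hm i hi X
  · have : D i = ∅ := by
      have h2 : D i ⊆ D q := hD.2.1 (by omega)
      rw [h0] at h2
      exact subset_empty.1 h2
    simp [this, cc]
end VF

namespace VF
open Finset
open scoped Classical

/-- rooted BFS forest structure on the components of `T` meeting `U`. -/
structure PF {V : Type} (T : SimpleGraph V) (U : Finset V) where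
  par : V → V
  d : V → ℕ
  r : V → V
  live : V → Prop
  hd : ∀ x, par x ≠ x → d (par x) < d x ∧ T.Adj x (par x) ∧ live x
  hr : ∀ x, r (par x) = r x
  hroot : ∀ x, live x → par x = x → r x = x
  rU : ∀ x, live x → r x ∈ U
  rr : ∀ x, live x → par (r x) = r x
  liveU : ∀ u ∈ U, live u
  live_reach : ∀ x y, live x → T.Reachable x y → live y ∧ r y = r x

theorem exists_PF {V : Type} (T : SimpleGraph V) (U : Finset V) : Nonempty (PF T U) := by
  set live : V → Prop := fun v => ∃ u ∈ U, T.Reachable v u with hlive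
  set r : V → V := fun v => if h : ∃ u ∈ U, T.connectedComponentMk u = T.connectedComponentMk v
    then h.choose else v with hr
  have req : ∀ x, live x → r x ∈ U ∧ T.Reachable (r x) x := by
    rintro x ⟨u, hu, hxu⟩
    have h : ∃ u ∈ U, T.connectedComponentMk u = T.connectedComponentMk x :=
      ⟨u, hu, SimpleGraph.ConnectedComponent.eq.2 hxu.symm⟩
    have := h.choose_spec
    simp only [hr]
    rw [dif_pos h]
    exact ⟨this.1, SimpleGraph.ConnectedComponent.eq.1 this.2⟩
  have lr : ∀ x y, live x → T.Reachable x y → live y ∧ r y = r x := by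
    rintro x y hx hxy
    have hy : live y := by
      obtain ⟨u, hu, h⟩ := hx
      exact ⟨u, hu, hxy.symm.trans h⟩
    refine ⟨hy, ?_⟩
    have : T.connectedComponentMk x = T.connectedComponentMk y :=
      SimpleGraph.ConnectedComponent.eq.2 hxy
    obtain ⟨u, hu, h⟩ := hx
    have h : ∃ u ∈ U, T.connectedComponentMk u = T.connectedComponentMk x :=
      ⟨u, hu, SimpleGraph.ConnectedComponent.eq.2 h.symm⟩
    simp only [hr]
    simp only [← this]
    rw [dif_pos h, dif_pos h]
  have hpar : ∀ x, ∃ w, (live x ∧ x ≠ r x → T.Adj x w ∧ T.dist (r x) w < T.dist (r x) x) ∧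
      (¬ (live x ∧ x ≠ r x) → w = x) := by
    intro x
    by_cases h : live x ∧ x ≠ r x
    · obtain ⟨p, hp⟩ := (req x h.1).2.symm.exists_walk_length_eq_dist
      revert p
      generalize hy : r x = y at *
      intro p hp
      cases p with
      | nil => exact absurd rfl h.2
      | @cons _ w _ hadj q =>
        refine ⟨w, fun _ => ⟨hadj, ?_⟩, fun h' => absurd h h'⟩
        rw [SimpleGraph.dist_comm (v := x), ← hp, SimpleGraph.dist_comm]
        have := SimpleGraph.dist_le q
        simp; omega
    · exact ⟨x, fun h' => absurd h' h, fun _ => rfl⟩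
  choose par hp1 hp2 using hpar
  have hne : ∀ x, par x ≠ x → live x ∧ x ≠ r x := fun x hx => by
    by_contra h; exact hx (hp2 x h)
  have hrp : ∀ x, r (par x) = r x := by
    intro x
    by_cases h : par x = x
    · rw [h]
    · have := hne x h
      exact (lr x _ this.1 (hp1 x this).1.reachable).2
  exact ⟨{
    par := par
    d := fun x => T.dist (r x) x
    r := r
    live := live
    hd := fun x hx => by
      have := hne x hx
      rw [hrp]
      exact ⟨(hp1 x this).2, (hp1 x this).1, this.1⟩
    hr := hrp
    hroot := fun x hl hx => by
      by_contra h
      have := hp1 x ⟨hl, fun h' => h h'.symm⟩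
      rw [hx] at this
      exact this.1.ne rfl
    rU := fun x hx => (req x hx).1
    rr := fun x hx => by
      apply hp2
      rintro ⟨_, h⟩
      exact h (lr x _ hx (req x hx).2.symm).2.symm
    liveU := fun u hu => ⟨u, hu, SimpleGraph.Reachable.refl _⟩
    live_reach := lr }⟩

namespace PF
variable {V : Type} {T : SimpleGraph V} {U : Finset V} (P : PF T U)

theorem reach_root (x : V) (hx : P.live x) : ∃ k, P.par^[k] x = P.r x := by
  induction h : P.d x using Nat.strong_induction_on generalizing x with
  | _ m ih =>
    by_cases hp : P.par x = x
    · exact ⟨0, (P.hroot x hx hp).symm⟩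
    · have := P.hd x hp
      obtain ⟨k, hk⟩ := ih _ (h ▸ this.1) (P.par x)
        (P.live_reach x _ hx this.2.1.reachable).1 rfl
      exact ⟨k+1, by rw [Function.iterate_succ_apply, hk, P.hr]⟩

theorem r_iter (x : V) (k : ℕ) : P.r (P.par^[k] x) = P.r x := by
  induction k with
  | zero => rfl
  | succ k ih => rw [Function.iterate_succ_apply', P.hr, ih]

theorem d_iter (x : V) (k : ℕ) : P.par^[k] x = x ∨ P.d (P.par^[k] x) < P.d x := by
  induction k with
  | zero => left; rfl
  | succ k ih =>
    rw [Function.iterate_succ_apply']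
    by_cases hp : P.par (P.par^[k] x) = P.par^[k] x
    · rw [hp]; exact ih
    · right
      have := (P.hd _ hp).1
      rcases ih with h | h
      · rw [h] at this ⊢; exact this
      · omega

theorem par_reach (T' : SimpleGraph V) (c : V)
    (hT : ∀ v, P.par v ≠ v → v ≠ c → T'.Adj v (P.par v)) (k : ℕ) (x : V)
    (hx : ∀ j < k, P.par^[j] x ≠ c) : T'.Reachable x (P.par^[k] x) := by
  induction k with
  | zero => exact SimpleGraph.Reachable.refl _
  | succ k ih =>
    have h1 := ih (fun j hj => hx j (by omega))
    rw [Function.iterate_succ_apply']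
    by_cases hp : P.par (P.par^[k] x) = P.par^[k] x
    · rw [hp]; exact h1
    · exact h1.trans (hT _ hp (hx k (by omega))).reachable

theorem desc_reach (T' : SimpleGraph V) (c : V)
    (hT : ∀ v, P.par v ≠ v → v ≠ c → T'.Adj v (P.par v)) (x : V)
    (hx : ∃ k, P.par^[k] x = c) : T'.Reachable x c := by
  have := P.par_reach T' c hT (Nat.find hx) x (fun j hj => Nat.find_min hx hj)
  rwa [Nat.find_spec hx] at this

theorem nondesc_reach (T' : SimpleGraph V) (c : V)
    (hT : ∀ v, P.par v ≠ v → v ≠ c → T'.Adj v (P.par v)) (x : V) (hl : P.live x)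
    (hx : ¬ ∃ k, P.par^[k] x = c) : T'.Reachable x (P.r x) := by
  obtain ⟨k, hk⟩ := P.reach_root x hl
  rw [← hk]
  exact P.par_reach T' c hT k x (fun j _ h => hx ⟨j, h⟩)

noncomputable def top (B : Finset V) (x : V) : V :=
  if _h : P.par x = x ∨ P.par x ∈ B then x else top B (P.par x)
termination_by P.d x
decreasing_by exact (P.hd x (fun h' => _h (Or.inl h'))).1

theorem top_fixed (B : Finset V) (x : V) (h : P.par x = x ∨ P.par x ∈ B) : P.top B x = x := by
  rw [top, dif_pos h]

theorem top_step (B : Finset V) (x : V) (h : ¬ (P.par x = x ∨ P.par x ∈ B)) :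
    P.top B x = P.top B (P.par x) := by
  rw [top, dif_neg h]

theorem top_spec (B : Finset V) (x : V) :
    (P.par (P.top B x) = P.top B x ∨ P.par (P.top B x) ∈ B) ∧ ∃ k, P.par^[k] x = P.top B x := by
  induction h : P.d x using Nat.strong_induction_on generalizing x with
  | _ m ih =>
    by_cases hs : P.par x = x ∨ P.par x ∈ B
    · rw [P.top_fixed B x hs]
      exact ⟨hs, 0, rfl⟩
    · rw [P.top_step B x hs]
      obtain ⟨h1, k, h2⟩ := ih _ (h ▸ (P.hd x (fun h' => hs (Or.inl h'))).1) (P.par x) rfl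
      exact ⟨h1, k+1, by rw [Function.iterate_succ_apply, h2]⟩

theorem top_anc (B : Finset V) (c : V) (hc : P.par c = c ∨ P.par c ∈ B) (k : ℕ) (z : V)
    (hz : P.par^[k] z = c) : ∃ j, P.par^[j] (P.top B z) = c := by
  induction k generalizing z with
  | zero => exact ⟨0, by rw [← hz] at hc ⊢; exact P.top_fixed B z hc⟩
  | succ k ih =>
    by_cases hs : P.par z = z ∨ P.par z ∈ B
    · rw [P.top_fixed B z hs]; exact ⟨k+1, hz⟩
    · rw [P.top_step B z hs]
      exact ih (P.par z) (by rwa [Function.iterate_succ_apply] at hz)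

theorem top_cover (B : Finset V) (c : V) (hc : P.par c = c ∨ P.par c ∈ B) (k : ℕ) (w : V)
    (hw : P.par^[k] w = c) : P.top B w = c ∨ ∃ w' ∈ B, P.top B w' = c := by
  induction k generalizing w with
  | zero => left; rw [← hw] at hc ⊢; exact P.top_fixed B w hc
  | succ k ih =>
    rw [Function.iterate_succ_apply] at hw
    rcases ih _ hw with h | h
    · by_cases hs : P.par w = w ∨ P.par w ∈ B
      · rcases hs with hs | hs
        · rw [hs] at h; exact Or.inl h
        · exact Or.inr ⟨_, hs, h⟩
      · left; rw [P.top_step B w hs, h]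
    · exact Or.inr h

/-- Euler tour lists. -/
theorem tour [Fintype V] (ρ : V) (hρ : P.par ρ = ρ) (m : ℕ) (A : Finset V) (hm : A.card = m)
    (hA : ρ ∈ A) (hcl : ∀ x ∈ A, x ≠ ρ → P.par x ≠ x ∧ P.par x ∈ A) :
    ∃ l : List V, l.IsChain T.Adj ∧ (∀ x, x ∈ l ↔ x ∈ A) ∧
      ∀ x, l.count x ≤ 1 + (A.filter (fun c => P.par c = x ∧ c ≠ x)).card := by
  induction m generalizing A with
  | zero => rw [card_eq_zero] at hm; simp [hm] at hA
  | succ m ih =>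
    by_cases hne : (A.erase ρ).Nonempty
    · obtain ⟨x, hx, hmax⟩ := exists_max_image (A.erase ρ) P.d hne
      rw [mem_erase] at hx
      have hxp := hcl x hx.2 hx.1
      obtain ⟨l, hl1, hl2, hl3⟩ := ih (A.erase x) (by rw [card_erase_of_mem hx.2, hm]; rfl)
        (mem_erase.2 ⟨hx.1.symm, hA⟩) (by
          intro y hy hyρ
          rw [mem_erase] at hy
          have h1 := hcl y hy.2 hyρ
          refine ⟨h1.1, mem_erase.2 ⟨?_, h1.2⟩⟩
          intro h
          have h2 := (P.hd y h1.1).1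
          have h3 := hmax y (mem_erase.2 ⟨hyρ, hy.2⟩)
          rw [h] at h2
          omega)
      have hw : P.par x ∈ l := (hl2 _).2 (mem_erase.2 ⟨hxp.1, hxp.2⟩)
      have hxl : x ∉ l := fun h => by simpa using (hl2 x).1 h
      obtain ⟨l1, l2, hsplit⟩ := List.append_of_mem hw
      have hadj := (P.hd x hxp.1).2.1
      refine ⟨l1 ++ P.par x :: x :: P.par x :: l2, ?_, ?_, ?_⟩
      · rw [hsplit] at hl1
        rw [List.isChain_append] at hl1 ⊢
        refine ⟨hl1.1, ?_, by simpa using hl1.2.2⟩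
        refine List.IsChain.cons_cons hadj.symm (List.IsChain.cons_cons hadj hl1.2.1)
      · intro y
        have := hl2 y
        rw [hsplit] at this
        simp only [List.mem_append, List.mem_cons, mem_erase] at this ⊢
        by_cases hy : y = x
        · subst hy; simp [hx.2]
        · simp only [hy, ne_eq, not_false_eq_true, true_and] at this
          rw [← this]; tauto
      · intro y
        have h3 := hl3 y
        have hmono : (filter (fun c => P.par c = y ∧ c ≠ y) (A.erase x)) ⊆
            (A.filter (fun c => P.par c = y ∧ c ≠ y)) :=
          filter_subset_filter _ (erase_subset _ _)
        by_cases hy : y = x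
        · subst hy
          have hc0 : l.count y = 0 := List.count_eq_zero.2 hxl
          rw [hsplit] at hc0
          simp only [List.count_append, List.count_cons] at hc0 ⊢
          have : ¬ (P.par y == y) = true := by simpa using hxp.1
          simp [this] at hc0 ⊢
          omega
        · by_cases hyw : P.par x = y
          · have hlt : (filter (fun c => P.par c = y ∧ c ≠ y) (A.erase x)).card <
              (A.filter (fun c => P.par c = y ∧ c ≠ y)).card := by
              apply card_lt_card
              refine ⟨hmono, fun h => ?_⟩
              have : x ∈ filter (fun c => P.par c = y ∧ c ≠ y) (A.erase x) :=
                h (mem_filter.2 ⟨hx.2, hyw, fun h => hy h.symm⟩)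
              simp at this
            rw [hsplit] at h3
            have hxy : ¬ (x == y) = true := by simpa using fun h => hy h.symm
            simp only [List.count_append, List.count_cons, hyw, beq_self_eq_true, hxy] at h3 ⊢
            simp only [ne_eq] at *
            simp at h3 ⊢
            omega
          · have := card_le_card hmono
            rw [hsplit] at h3
            have hxy : ¬ (x == y) = true := by simpa using fun h => hy h.symm
            have hxy2 : ¬ (P.par x == y) = true := by simpa using hyw
            simp only [List.count_append, List.count_cons, hxy, hxy2] at h3 ⊢
            simp only [ne_eq] at *
            simp at h3 ⊢
            omega
    · rw [not_nonempty_iff_eq_empty] at hne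
      have hAe : A = {ρ} := by
        ext y
        constructor
        · intro hy
          by_contra h
          have : y ∈ A.erase ρ := mem_erase.2 ⟨by simpa using h, hy⟩
          simp [hne] at this
        · intro hy; rw [mem_singleton.1 hy]; exact hA
      refine ⟨[ρ], List.IsChain.singleton _, ?_, ?_⟩
      · intro x; simp [hAe]
      · intro x
        have : List.count x [ρ] ≤ 1 := by
          simpa using List.count_le_length (a := x) (l := [ρ])
        omega
end PF
end VF

namespace VF
open Finset
open scoped Classical

noncomputable def dg {V : Type} [Fintype V] (T : SimpleGraph V) (v : V) : ℕ :=
  (univ.filter (fun w => T.Adj v w)).card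

noncomputable def pot {V : Type} [Fintype V] (T : SimpleGraph V) : ℕ := ∑ v, 3 ^ dg T v

theorem dg_mono {V : Type} [Fintype V] {T T' : SimpleGraph V} (h : T ≤ T') (v : V) :
    dg T v ≤ dg T' v :=
  card_le_card (fun w hw => by simp only [mem_filter, mem_univ, true_and] at hw ⊢; exact h hw)

theorem pot_lt {V : Type} [Fintype V] {T T' : SimpleGraph V} (h : T ≤ T') (x y : V)
    (h1 : T'.Adj x y) (h2 : ¬ T.Adj x y) : pot T < pot T' := by
  apply sum_lt_sum
  · intro v _
    exact Nat.pow_le_pow_right (by norm_num) (dg_mono h v)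
  · refine ⟨x, mem_univ _, Nat.pow_lt_pow_right (by norm_num) ?_⟩
    apply card_lt_card
    refine ⟨fun w hw => by simp only [mem_filter, mem_univ, true_and] at hw ⊢; exact h hw, ?_⟩
    intro h'
    have : y ∈ univ.filter (fun w => T.Adj x w) := h' (by simp [h1])
    simp at this
    exact h2 this

theorem short_path {V γ : Type} [Fintype V] (K : SimpleGraph V) (L : V → Prop) (g : V → γ)
    (h : ∃ z1 z2, L z1 ∧ L z2 ∧ K.Reachable z1 z2 ∧ g z1 ≠ g z2) :
    ∃ z1 z2, L z1 ∧ L z2 ∧ g z1 ≠ g z2 ∧ ∃ Q : SimpleGraph V, Q ≤ K ∧ Q.Reachable z1 z2 ∧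
      dg Q z1 ≤ 1 ∧ dg Q z2 ≤ 1 ∧ ∀ v, v ≠ z1 → v ≠ z2 → dg Q v ≤ 2 ∧ (L v → dg Q v = 0) := by
  have hex : ∃ m, ∃ z1 z2, ∃ p : K.Walk z1 z2, L z1 ∧ L z2 ∧ g z1 ≠ g z2 ∧ p.length = m := by
    obtain ⟨z1, z2, h1, h2, ⟨p⟩, h4⟩ := h
    exact ⟨_, z1, z2, p, h1, h2, h4, rfl⟩
  obtain ⟨z1, z2, p, h1, h2, h3, h4⟩ := Nat.find_spec hex
  have hmin : ∀ y1 y2 (q : K.Walk y1 y2), L y1 → L y2 → g y1 ≠ g y2 → p.length ≤ q.length := by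
    intro y1 y2 q l1 l2 l3
    rw [h4]
    exact Nat.find_min' hex ⟨y1, y2, q, l1, l2, l3, rfl⟩
  set q := p.bypass with hq
  have hqp : q.IsPath := p.bypass_isPath
  have hlen : q.length ≤ p.length := p.length_bypass_le
  have hz : z1 ≠ z2 := fun h => h3 (by rw [h])
  have hnil : ¬ q.Nil := fun h => hz h.eq
  have hdg : ∀ v, dg q.toSubgraph.spanningCoe v = (q.toSubgraph.neighborSet v).ncard := by
    intro v
    unfold dg
    rw [← Set.ncard_coe_finset]
    congr 1
    ext w
    simp
  refine ⟨z1, z2, h1, h2, h3, q.toSubgraph.spanningCoe, ?_, ?_, ?_, ?_, ?_⟩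
  · exact q.toSubgraph.spanningCoe_le
  · have := q.toSubgraph_connected.preconnected
    have h5 := (this ⟨z1, q.start_mem_verts_toSubgraph⟩ ⟨z2, q.end_mem_verts_toSubgraph⟩)
    exact h5.map (SimpleGraph.Subgraph.coeEmbeddingSpanningCoe q.toSubgraph).toHom
  · rw [hdg, hqp.neighborSet_toSubgraph_startpoint hnil]; simp
  · rw [hdg, hqp.neighborSet_toSubgraph_endpoint hnil]; simp
  · intro v hv1 hv2
    by_cases hs : v ∈ q.support
    · constructor
      · obtain ⟨i, hi, hil⟩ := SimpleGraph.Walk.mem_support_iff_exists_getVert.1 hs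
        have hi0 : i ≠ 0 := by
          rintro rfl; simp at hi; exact hv1 hi.symm
        have hil2 : i < q.length := by
          refine lt_of_le_of_ne hil ?_
          rintro rfl; simp at hi; exact hv2 hi.symm
        rw [hdg, ← hi, hqp.ncard_neighborSet_toSubgraph_internal_eq_two hi0 hil2]
      · intro hL
        exfalso
        have e := congrArg SimpleGraph.Walk.length (q.take_spec hs)
        rw [SimpleGraph.Walk.length_append] at e
        have e1 : (q.takeUntil v hs).length ≠ 0 := fun h =>
          hv1 (SimpleGraph.Walk.eq_of_length_eq_zero h).symm
        have e2 : (q.dropUntil v hs).length ≠ 0 := fun h =>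
          hv2 (SimpleGraph.Walk.eq_of_length_eq_zero h)
        by_cases hg : g z1 = g v
        · have := hmin _ _ (q.dropUntil v hs) hL h2 (by rwa [← hg])
          omega
        · have := hmin _ _ (q.takeUntil v hs) h1 hL hg
          omega
    · have : dg q.toSubgraph.spanningCoe v = 0 := by
        unfold dg
        rw [card_eq_zero, filter_eq_empty_iff]
        intro w _ hw
        simp only [SimpleGraph.Subgraph.spanningCoe_adj] at hw
        exact hs (SimpleGraph.Walk.mem_support_of_adj_toSubgraph hw)
      rw [this]; simp
end VF

namespace VF
open Finset
open scoped Classical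

def Conn {V : Type} (H : SimpleGraph V) (U : Finset V) (T : SimpleGraph V) : Prop :=
  ∀ u ∈ U, ∀ u' ∈ U, H.Reachable u u' → T.Reachable u u'

structure IsMin {V : Type} [Fintype V] (H : SimpleGraph V) (U : Finset V) (T : SimpleGraph V) :
    Prop where
  le : T ≤ H
  conn : Conn H U T
  min : ∀ T', T' ≤ H → Conn H U T' → pot T ≤ pot T'

theorem exists_isMin {V : Type} [Fintype V] (H : SimpleGraph V) (U : Finset V) :
    ∃ T, IsMin H U T := by
  have hex : ∃ m, ∃ T, T ≤ H ∧ Conn H U T ∧ pot T = m :=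
    ⟨_, H, le_rfl, fun _ _ _ _ h => h, rfl⟩
  obtain ⟨T, h1, h2, h3⟩ := Nat.find_spec hex
  exact ⟨T, h1, h2, fun T' a b => by rw [h3]; exact Nat.find_min' hex ⟨T', a, b, rfl⟩⟩

section
variable {V : Type} [Fintype V] {H T : SimpleGraph V} {U : Finset V}

theorem conn_of_roots (hM : IsMin H U T) (P : PF T U) (T' : SimpleGraph V) (h : ∀ u ∈ U, T'.Reachable u (P.r u)) :
    Conn H U T' := by
  intro u hu u' hu' hr
  have h1 := hM.conn u hu u' hu' hr
  have h2 := (P.live_reach u u' (P.liveU u hu) h1).2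
  exact (h u hu).trans (h2 ▸ (h u' hu').symm)

theorem adj_par (hM : IsMin H U T) (P : PF T U) (x y : V) (hxy : T.Adj x y) : P.par x = y ∨ P.par y = x := by
  set T0 : SimpleGraph V :=
    { Adj := fun a b => T.Adj a b ∧ (P.par a = b ∨ P.par b = a)
      symm := ⟨fun _ _ h => ⟨h.1.symm, h.2.symm⟩⟩
      loopless := ⟨fun _ h => h.1.ne rfl⟩ } with hT0
  have hle : T0 ≤ T := fun a b h => h.1
  have hc : Conn H U T0 := by
    apply conn_of_roots hM P
    intro u hu
    obtain ⟨k, hk⟩ := P.reach_root u (P.liveU u hu)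
    rw [← hk]
    clear hk
    induction k with
    | zero => exact SimpleGraph.Reachable.refl _
    | succ k ih =>
      rw [Function.iterate_succ_apply']
      by_cases hp : P.par (P.par^[k] u) = P.par^[k] u
      · rw [hp]; exact ih
      · refine ih.trans (SimpleGraph.Adj.reachable ?_)
        exact ⟨(P.hd _ hp).2.1, Or.inl rfl⟩
  have := hM.min T0 (hle.trans hM.le) hc
  by_contra hne
  have h2 : ¬ T0.Adj x y := fun h => hne h.2
  have := pot_lt hle x y hxy h2
  omega

theorem del_adj (hM : IsMin H U T) (P : PF T U) (c : V) (v : V) (hv : P.par v ≠ v) (hvc : v ≠ c) :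
    (T.deleteEdges {s(c, P.par c)}).Adj v (P.par v) := by
  rw [SimpleGraph.deleteEdges_adj]
  refine ⟨(P.hd v hv).2.1, ?_⟩
  intro h
  simp only [Set.mem_singleton_iff, Sym2.eq_iff] at h
  rcases h with ⟨h, _⟩ | ⟨h1, h2⟩
  · exact hvc h
  · have a := (P.hd v hv).1
    have hc : P.par c ≠ c := by rw [← h1]; exact hvc
    have b := (P.hd c hc).1
    rw [h2] at a
    rw [← h1] at b
    omega

theorem exists_desc (hM : IsMin H U T) (P : PF T U) (x : V) (hx : P.par x ≠ x) : ∃ u ∈ U, ∃ k, P.par^[k] u = x := by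
  by_contra hno
  push Not at hno
  have hc : Conn H U (T.deleteEdges {s(x, P.par x)}) := by
    apply conn_of_roots hM P
    intro u hu
    apply P.nondesc_reach _ x (fun v h1 h2 => del_adj hM P x v h1 h2) u (P.liveU u hu)
    rintro ⟨k, hk⟩
    exact hno u hu k hk
  have hle := SimpleGraph.deleteEdges_le (G := T) {s(x, P.par x)}
  have h1 := hM.min _ (hle.trans hM.le) hc
  have h2 := pot_lt hle x (P.par x) (P.hd x hx).2.1 (by simp)
  omega

theorem nonlive_dg (hM : IsMin H U T) (P : PF T U) (v : V) (hv : ¬ P.live v) : dg T v = 0 := by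
  unfold dg
  rw [card_eq_zero, filter_eq_empty_iff]
  intro w _ hw
  rcases adj_par hM P v w hw with h | h
  · exact hv (P.hd v (by rw [h]; exact hw.ne')).2.2
  · have := (P.hd w (by rw [h]; exact hw.ne)).2.2
    exact hv (P.live_reach w v this hw.symm.reachable).1

theorem dg_le_children (hM : IsMin H U T) (P : PF T U) (b : V) :
    dg T b ≤ 1 + (univ.filter (fun c => P.par c = b ∧ c ≠ b)).card := by
  have : univ.filter (fun w => T.Adj b w) ⊆
      insert (P.par b) (univ.filter (fun c => P.par c = b ∧ c ≠ b)) := by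
    intro w hw
    simp only [mem_filter, mem_univ, true_and, mem_insert] at hw ⊢
    rcases adj_par hM P b w hw with h | h
    · exact Or.inl h.symm
    · exact Or.inr ⟨h, hw.ne'⟩
  refine (card_le_card this).trans ((card_insert_le _ _).trans (by omega))

theorem live_root_eq (hM : IsMin H U T) (P : PF T U) (z1 z2 : V) (h1 : P.live z1) (h2 : P.live z2) (h : H.Reachable z1 z2) :
    P.r z1 = P.r z2 := by
  have e : ∀ z, P.live z → T.Reachable z (P.r z) := by
    intro z hz
    obtain ⟨k, hk⟩ := P.reach_root z hz
    rw [← hk]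
    have := P.par_reach T (P.r z) (fun v hv _ => (P.hd v hv).2.1)
    clear hk
    induction k with
    | zero => exact SimpleGraph.Reachable.refl _
    | succ k ih =>
      rw [Function.iterate_succ_apply']
      by_cases hp : P.par (P.par^[k] z) = P.par^[k] z
      · rw [hp]; exact ih
      · exact ih.trans (P.hd _ hp).2.1.reachable
  have a := e z1 h1
  have b := e z2 h2
  have hH : H.Reachable (P.r z1) (P.r z2) := (a.symm.mono hM.le).trans (h.trans (b.mono hM.le))
  have hT := hM.conn _ (P.rU _ h1) _ (P.rU _ h2) hH
  have := (P.live_reach z1 z2 h1 ((a.trans hT).trans b.symm)).2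
  exact this.symm

/-- the swap contradiction -/
theorem swap_aux (hM : IsMin H U T) (P : PF T U) (B X : Finset V) (hBX : B ⊆ X) (k : ℕ) (hk : 2 ≤ k)
    (hB : ∀ b ∈ B, k ≤ dg T b) (hX : ∀ v, v ∉ X → dg T v ≤ k - 2)
    (hK : 4 * Fintype.card V < 3 ^ (k - 2))
    (z1 z2 : V) (hl1 : P.live z1 ∧ z1 ∉ X) (hl2 : P.live z2 ∧ z2 ∉ X)
    (htop : P.top B z1 ≠ P.top B z2) (hdd : P.d (P.top B z2) ≤ P.d (P.top B z1))
    (Q : SimpleGraph V) (hQ : Q ≤ rs H X) (hQr : Q.Reachable z1 z2)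
    (hd1 : dg Q z1 ≤ 1) (hd2 : dg Q z2 ≤ 1)
    (hinner : ∀ v, v ≠ z1 → v ≠ z2 → dg Q v ≤ 2 ∧ (P.live v ∧ v ∉ X → dg Q v = 0)) : False := by
  set c := P.top B z1 with hc
  obtain ⟨hs1, k1, hk1⟩ := P.top_spec B z1
  rw [← hc] at hs1 hk1
  have hQH : Q ≤ H := fun a b h => (hQ h).1
  have hnd : ¬ ∃ j, P.par^[j] z2 = c := by
    rintro ⟨j, hj⟩
    obtain ⟨i, hi⟩ := P.top_anc B c hs1 j z2 hj
    rcases P.d_iter (P.top B z2) i with h | h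
    · exact htop (by rw [← hi, h])
    · rw [hi] at h; omega
  have hroot : P.r z1 = P.r z2 := live_root_eq hM P z1 z2 hl1.1 hl2.1 (hQr.mono hQH)
  have hcl : P.live c := by
    have h1 := P.par_reach T c (fun v hv _ => (P.hd v hv).2.1)
    have : T.Reachable z1 c := P.desc_reach T c (fun v hv _ => (P.hd v hv).2.1) z1 ⟨k1, hk1⟩
    exact (P.live_reach z1 c hl1.1 this).1
  have hrc : P.r c = P.r z1 := by rw [← hk1, P.r_iter]
  have hpc : P.par c ≠ c := by
    intro h
    have := P.hroot c hcl h
    obtain ⟨j, hj⟩ := P.reach_root z2 hl2.1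
    exact hnd ⟨j, by rw [hj, ← hroot, ← hrc, this]⟩
  have hbB : P.par c ∈ B := hs1.resolve_left hpc
  set b := P.par c with hb
  set T1 := T.deleteEdges {s(c, b)} with hT1
  set T2 := T1 ⊔ Q with hT2
  have hadj : ∀ v, P.par v ≠ v → v ≠ c → T2.Adj v (P.par v) := fun v h1 h2 =>
    Or.inl (del_adj hM P c v h1 h2)
  have hc2 : Conn H U T2 := by
    apply conn_of_roots hM P
    intro u hu
    by_cases hdesc : ∃ j, P.par^[j] u = c
    · have r1 := P.desc_reach T2 c hadj u hdesc
      have r2 := P.desc_reach T2 c hadj z1 ⟨k1, hk1⟩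
      have r3 : T2.Reachable z1 z2 := hQr.mono le_sup_right
      have r4 := P.nondesc_reach T2 c hadj z2 hl2.1 hnd
      obtain ⟨j, hj⟩ := hdesc
      have : P.r u = P.r z2 := by rw [← P.r_iter u j, hj, hrc, hroot]
      rw [this]
      exact ((r1.trans r2.symm).trans r3).trans r4
    · exact P.nondesc_reach T2 c hadj u (P.liveU u hu) hdesc
  have hle : T1 ≤ T := SimpleGraph.deleteEdges_le _
  have hmin := hM.min T2 (sup_le (hle.trans hM.le) hQH) hc2
  have hdgs : ∀ v, dg T2 v ≤ dg T1 v + dg Q v := by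
    intro v
    unfold dg
    refine le_trans (card_le_card ?_) (card_union_le _ _)
    intro w hw
    simpa [hT2] using hw
  have hXQ : ∀ v ∈ X, dg Q v = 0 := by
    intro v hv
    unfold dg
    rw [card_eq_zero, filter_eq_empty_iff]
    intro w _ hw
    exact (hQ hw).2.1 hv
  have hb1 : dg T1 b + 1 ≤ dg T b := by
    unfold dg
    apply card_lt_card
    refine ⟨fun w hw => by simp only [mem_filter, mem_univ, true_and] at hw ⊢; exact hle hw, ?_⟩
    intro h'
    have h3 := h' (show c ∈ _ by
      simpa using (P.hd c hpc).2.1.symm)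
    simp [hT1, SimpleGraph.deleteEdges_adj, Sym2.eq_swap] at h3
  set K := 3 ^ (k-2) with hKd
  have hpt : ∀ v, 3 ^ dg T2 v + (if v = b then 6 * K else 0) ≤
      3 ^ dg T v + (if v = z1 then 2 * K else 0) + (if v = z2 then 2 * K else 0) + 8 := by
    intro v
    have m1 := dg_mono hle v
    have m2 := hdgs v
    have hpw : ∀ {a b : ℕ}, a ≤ b → 3 ^ a ≤ 3 ^ b := fun h => Nat.pow_le_pow_right (by norm_num) h
    by_cases hvb : v = b
    · have := hXQ v (hvb ▸ hBX hbB)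
      have hkb : k ≤ dg T v := hvb ▸ hB b hbB
      have e1 : dg T2 v ≤ dg T v - 1 := by
        have h9 := hb1
        rw [← hvb] at h9
        omega
      have e2 := hpw e1
      have e3 : 3 ^ dg T v = 3 * 3 ^ (dg T v - 1) := by
        rw [← pow_succ']; congr 1; omega
      have e4 : 3 * K ≤ 3 ^ (dg T v - 1) := by
        rw [hKd, ← pow_succ']; apply hpw; omega
      rw [if_pos hvb]
      omega
    · rw [if_neg hvb]
      have hend : v ∉ X → dg Q v ≤ 1 → 3 ^ dg T2 v ≤ 3 ^ dg T v + 2 * K := by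
        intro hvX hq
        have e1 : dg T2 v ≤ dg T v + 1 := by omega
        have e2 := hpw e1
        have e3 := hpw (hX v hvX)
        rw [pow_succ] at e2
        omega
      by_cases hv1 : v = z1
      · have := hend (hv1 ▸ hl1.2) (hv1 ▸ hd1)
        rw [if_pos hv1]; omega
      · by_cases hv2 : v = z2
        · have := hend (hv2 ▸ hl2.2) (hv2 ▸ hd2)
          rw [if_pos hv2]; omega
        · rw [if_neg hv1, if_neg hv2]
          obtain ⟨i1, i2⟩ := hinner v hv1 hv2
          by_cases hq : dg Q v = 0
          · have := hpw (show dg T2 v ≤ dg T v by omega)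
            omega
          · have hvX : v ∉ X := fun h => hq (hXQ v h)
            have hnl : ¬ P.live v := fun h => hq (i2 ⟨h, hvX⟩)
            have h0 := nonlive_dg hM P v hnl
            have := hpw (show dg T2 v ≤ 2 by omega)
            have : 0 < 3 ^ dg T v := by positivity
            omega
  have hsum := sum_le_sum (fun v (_ : v ∈ (univ : Finset V)) => hpt v)
  simp only [sum_add_distrib, sum_ite_eq', mem_univ, if_true, sum_const, smul_eq_mul] at hsum
  unfold pot at hmin
  simp only [card_univ] at hsum
  omega

theorem top_const (hM : IsMin H U T) (P : PF T U) (B X : Finset V) (hBX : B ⊆ X) (k : ℕ) (hk : 2 ≤ k)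
    (hB : ∀ b ∈ B, k ≤ dg T b) (hX : ∀ v, v ∉ X → dg T v ≤ k - 2)
    (hK : 4 * Fintype.card V < 3 ^ (k - 2))
    (z1 z2 : V) (hl1 : P.live z1 ∧ z1 ∉ X) (hl2 : P.live z2 ∧ z2 ∉ X)
    (hr : (rs H X).Reachable z1 z2) : P.top B z1 = P.top B z2 := by
  by_contra hne
  obtain ⟨y1, y2, h1, h2, h3, Q, h4, h5, h6, h7, h8⟩ :=
    short_path (rs H X) (fun v => P.live v ∧ v ∉ X) (P.top B) ⟨z1, z2, hl1, hl2, hr, hne⟩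
  rcases le_total (P.d (P.top B y2)) (P.d (P.top B y1)) with h | h
  · exact swap_aux hM P B X hBX k hk hB hX hK y1 y2 h1 h2 h3 h Q h4 h5 h6 h7 h8
  · exact swap_aux hM P B X hBX k hk hB hX hK y2 y1 h2 h1 h3.symm h Q h4 h5.symm h7 h6
      (fun v a b => h8 v b a)

theorem count_tops (hM : IsMin H U T) (P : PF T U) (B X : Finset V) (hBX : B ⊆ X) (k : ℕ) (hB : ∀ b ∈ B, k + 1 ≤ dg T b) :
    (U.image H.connectedComponentMk).card + k * B.card ≤
      X.card + ((U \ X).image (P.top B)).card := by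
  set Rt := univ.filter (fun x => P.live x ∧ P.par x = x) with hRt
  set Ch := univ.filter (fun x => P.par x ≠ x ∧ P.par x ∈ B) with hCh
  have h1 : Rt ∪ Ch ⊆ (X ∪ (U \ X)).image (P.top B) := by
    intro c hc
    have hroot : P.par c = c ∨ P.par c ∈ B := by
      simp only [hRt, hCh, mem_union, mem_filter, mem_univ, true_and] at hc
      tauto
    have hdesc : ∃ u ∈ U, ∃ k, P.par^[k] u = c := by
      by_cases hp : P.par c = c
      · have hl : P.live c := by
          simp only [hRt, hCh, mem_union, mem_filter, mem_univ, true_and] at hc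
          tauto
        exact ⟨c, by rw [← P.hroot c hl hp]; exact P.rU c hl, 0, rfl⟩
      · exact exists_desc hM P c hp
    obtain ⟨u, hu, j, hj⟩ := hdesc
    rw [mem_image]
    rcases P.top_cover B c hroot j u hj with h | ⟨w, hw, h⟩
    · refine ⟨u, ?_, h⟩
      by_cases hx : u ∈ X <;> simp [hx, hu]
    · exact ⟨w, mem_union_left _ (hBX hw), h⟩
  have h2 : (Rt ∪ Ch).card ≤ X.card + ((U \ X).image (P.top B)).card := by
    refine (card_le_card h1).trans ?_
    rw [image_union]
    exact (card_union_le _ _).trans (Nat.add_le_add_right card_image_le _)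
  have h3 : Disjoint Rt Ch := by
    rw [disjoint_left]
    intro x hx hx'
    simp only [hRt, hCh, mem_filter, mem_univ, true_and] at hx hx'
    exact hx'.1 hx.2
  rw [card_union_of_disjoint h3] at h2
  have h4 : (U.image H.connectedComponentMk).card ≤ Rt.card := by
    have : U.image H.connectedComponentMk ⊆ Rt.image H.connectedComponentMk := by
      intro κ hκ
      obtain ⟨u, hu, rfl⟩ := mem_image.1 hκ
      have hl := P.liveU u hu
      obtain ⟨k, hk⟩ := P.reach_root u hl
      have hr : T.Reachable u (P.r u) :=
        P.desc_reach T (P.r u) (fun v hv _ => (P.hd v hv).2.1) u ⟨k, hk⟩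
      refine mem_image.2 ⟨P.r u, ?_, ?_⟩
      · simp only [hRt, mem_filter, mem_univ, true_and]
        exact ⟨(P.live_reach _ _ hl hr).1, P.rr u hl⟩
      · exact SimpleGraph.ConnectedComponent.eq.2 (hr.symm.mono hM.le)
    exact (card_le_card this).trans card_image_le
  have h5 : k * B.card ≤ Ch.card := by
    have hf := card_eq_sum_card_fiberwise (s := Ch) (t := B) (f := P.par) (fun x hx => by
      simp only [hCh, coe_filter, mem_univ, true_and, Set.mem_ofPred_eq] at hx
      exact hx.2)
    rw [hf, mul_comm, ← smul_eq_mul]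
    apply card_nsmul_le_sum
    intro b hb
    have e1 := dg_le_children hM P b
    have e2 := hB b hb
    have e3 : (univ.filter (fun c => P.par c = b ∧ c ≠ b)) ⊆ Ch.filter (fun a => P.par a = b) := by
      intro c hc
      simp only [hCh, mem_filter, mem_univ, true_and] at hc ⊢
      refine ⟨⟨?_, hc.1 ▸ hb⟩, hc.1⟩
      rw [hc.1]; exact hc.2.symm
    have := card_le_card e3
    omega
  omega

theorem dg_bound (hM : IsMin H U T) (p : ℕ) (hp : Fintype.card V < 2 ^ p)
    (ht : ∀ X : Finset V, ((U \ X).image (rs H X).connectedComponentMk).card ≤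
      (U.image H.connectedComponentMk).card + 25 * X.card) (v : V) : dg T v < 2 * p + 60 := by
  obtain ⟨P⟩ := exists_PF T U
  by_contra hv
  push Not at hv
  set Bk : ℕ → Finset V := fun k => univ.filter (fun x => k ≤ dg T x) with hBk
  have hpig : ∃ j < p, (Bk (2*p+60-(j+1))).card ≤ 2 * (Bk (2*p+60-j)).card := by
    by_contra hno
    push Not at hno
    have : ∀ j ≤ p, 2 ^ j ≤ (Bk (2*p+60-j)).card := by
      intro j
      induction j with
      | zero =>
        intro _
        simp only [pow_zero]
        exact card_pos.2 ⟨v, by simp [hBk]; omega⟩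
      | succ j ih =>
        intro hj
        have a := ih (by omega)
        have b := hno j (by omega)
        rw [pow_succ]; omega
    have a := this p le_rfl
    have b := card_le_univ (Bk (2*p+60-p))
    omega
  obtain ⟨j, hj, hcard⟩ := hpig
  set k := 2*p+60-j with hk
  have hkk : 2*p+60-(j+1) = k - 1 := by omega
  rw [hkk] at hcard
  have hBX : Bk k ⊆ Bk (k-1) := by
    intro x hx
    simp only [hBk, mem_filter, mem_univ, true_and] at hx ⊢
    omega
  have hne : 1 ≤ (Bk k).card := card_pos.2 ⟨v, by simp [hBk]; omega⟩
  have hK : 4 * Fintype.card V < 3 ^ (k - 2) := by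
    have e1 : 2 ^ (k-2) ≤ 3 ^ (k-2) := Nat.pow_le_pow_left (by norm_num) _
    have e2 : 2 ^ (p+2) ≤ 2 ^ (k-2) := Nat.pow_le_pow_right (by norm_num) (by omega)
    rw [pow_add] at e2
    omega
  have hc := count_tops hM P (Bk k) (Bk (k-1)) hBX (k-1) (by
    intro b hb
    simp only [hBk, mem_filter, mem_univ, true_and] at hb
    omega)
  have h2 : ((U \ Bk (k-1)).image (P.top (Bk k))).card ≤
      ((U \ Bk (k-1)).image (rs H (Bk (k-1))).connectedComponentMk).card := by
    apply card_image_factor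
    intro x hx y hy hxy
    rw [mem_sdiff] at hx hy
    refine top_const hM P (Bk k) (Bk (k-1)) hBX k (by omega) (by simp [hBk]) ?_ hK x y
      ⟨P.liveU x hx.1, hx.2⟩ ⟨P.liveU y hy.1, hy.2⟩ (SimpleGraph.ConnectedComponent.eq.1 hxy)
    intro w hw
    simp only [hBk, mem_filter, mem_univ, true_and] at hw
    omega
  have h3 := ht (Bk (k-1))
  have h4 : 59 * (Bk k).card ≤ (k-1) * (Bk k).card := Nat.mul_le_mul_right _ (by omega)
  omega
end

/-- Part II: low-multiplicity lists through the terminals of each component. -/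
theorem exists_lists {V : Type} [Fintype V] (H : SimpleGraph V) (U : Finset V) (p : ℕ)
    (hp : Fintype.card V < 2 ^ p)
    (ht : ∀ X : Finset V, ((U \ X).image (rs H X).connectedComponentMk).card ≤
      (U.image H.connectedComponentMk).card + 25 * X.card) :
    ∃ lst : V → List V, ∀ u, (lst u).IsChain H.Adj ∧ (∀ x ∈ lst u, H.Reachable u x) ∧
      (∀ w ∈ U, H.Reachable u w → w ∈ lst u) ∧ ∀ x, (lst u).count x ≤ 2 * p + 60 := by
  obtain ⟨T, hM⟩ := exists_isMin H U
  obtain ⟨P⟩ := exists_PF T U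
  have hreach : ∀ x, P.live x → T.Reachable x (P.r x) := fun x hx => by
    obtain ⟨k, hk⟩ := P.reach_root x hx
    exact P.desc_reach T (P.r x) (fun v hv _ => (P.hd v hv).2.1) x ⟨k, hk⟩
  suffices h : ∀ u, ∃ l : List V, l.IsChain H.Adj ∧ (∀ x ∈ l, H.Reachable u x) ∧
      (∀ w ∈ U, H.Reachable u w → w ∈ l) ∧ ∀ x, l.count x ≤ 2 * p + 60 by
    choose lst h using h
    exact ⟨lst, h⟩
  intro u
  by_cases hu : ∃ w ∈ U, H.Reachable u w
  · obtain ⟨w, hw, huw⟩ := hu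
    have hwl := P.liveU w hw
    obtain ⟨l, h1, h2, h3⟩ := P.tour (P.r w) (P.rr w hwl) _
      (univ.filter (fun x => P.live x ∧ P.r x = P.r w)) rfl
      (by
        simp only [mem_filter, mem_univ, true_and]
        exact P.live_reach _ _ hwl (hreach w hwl))
      (by
        intro x hx hne
        simp only [mem_filter, mem_univ, true_and] at hx ⊢
        have hp : P.par x ≠ x := fun h => hne (by rw [← hx.2, P.hroot x hx.1 h])
        exact ⟨hp, (P.live_reach _ _ hx.1 (P.hd x hp).2.1.reachable).1, by rw [P.hr, hx.2]⟩)
    refine ⟨l, h1.imp (fun a b h => hM.le h), ?_, ?_, ?_⟩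
    · intro x hx
      rw [h2] at hx
      simp only [mem_filter, mem_univ, true_and] at hx
      refine huw.trans (((hreach w hwl).mono hM.le).trans ?_)
      rw [← hx.2]
      exact ((hreach x hx.1).mono hM.le).symm
    · intro x hx hux
      rw [h2]
      simp only [mem_filter, mem_univ, true_and]
      exact ⟨P.liveU x hx, live_root_eq hM P x w (P.liveU x hx) hwl (hux.symm.trans huw)⟩
    · intro x
      refine (h3 x).trans ?_
      have hb := dg_bound hM p hp ht x
      have : (filter (fun c => P.par c = x ∧ c ≠ x)
          (univ.filter (fun x => P.live x ∧ P.r x = P.r w))).card ≤ dg T x := by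
        apply card_le_card
        intro c hc
        simp only [mem_filter, mem_univ, true_and] at hc ⊢
        have := (P.hd c (by rw [hc.2.1]; exact hc.2.2.symm)).2.1
        rw [hc.2.1] at this
        exact this.symm
      omega
  · refine ⟨[], List.IsChain.nil, by simp, ?_, by simp⟩
    intro w hw h
    exact absurd ⟨w, hw, h⟩ hu
end VF

namespace VF
open Finset
open scoped Classical

/-- The hierarchy data. -/
structure Sch (V : Type) [Fintype V] (G : SimpleGraph V) (p Δ : ℕ) where
  lv : V → Fin p
  cid : Fin p → V → V
  lst : Fin p × V → List V
  adjmem : ∀ j x y, G.Adj x y → lv x ≤ j → lv y ≤ j → cid j x = cid j y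
  conn : ∀ j x y, lv x ≤ j → lv y ≤ j → cid j x = cid j y →
    (rs G (univ.filter (fun v => ¬ lv v ≤ j))).Reachable x y
  chain : ∀ Γ, (lst Γ).IsChain G.Adj
  lst_mem : ∀ Γ x, x ∈ lst Γ → lv x ≤ Γ.1 ∧ cid Γ.1 x = Γ.2
  mem_lst : ∀ y, y ∈ lst (lv y, cid (lv y) y)
  count : ∀ Γ x, (lst Γ).count x ≤ Δ

namespace Sch
variable {V : Type} [Fintype V] {G : SimpleGraph V} {p Δ : ℕ} (S : Sch V G p Δ)

def mem (Γ : Fin p × V) (x : V) : Prop := S.lv x ≤ Γ.1 ∧ S.cid Γ.1 x = Γ.2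
def gam (y : V) : Fin p × V := (S.lv y, S.cid (S.lv y) y)
def nb (Γ : Fin p × V) (z : V) : Prop := Γ.1 < S.lv z ∧ ∃ x, S.mem Γ x ∧ G.Adj x z

theorem mem_gam (y : V) : S.mem (S.gam y) y := ⟨le_rfl, rfl⟩

theorem cid_mono {Γ : Fin p × V} {x y : V} (hx : S.mem Γ x) (hy : S.mem Γ y) (j : Fin p)
    (hj : Γ.1 ≤ j) : S.cid j x = S.cid j y := by
  obtain ⟨w⟩ := S.conn Γ.1 x y hx.1 hy.1 (hx.2.trans hy.2.symm)
  clear hx hy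
  induction w with
  | nil => rfl
  | cons h _ ih =>
    have h2 := h.2
    simp only [mem_filter, mem_univ, true_and, not_not] at h2
    rw [S.adjmem j _ _ h.1 (h2.1.trans hj) (h2.2.trans hj), ih]

/-- Lemma N -/
theorem nb_mem {Γ : Fin p × V} {z x : V} (hz : S.nb Γ z) (hx : S.mem Γ x) (j : Fin p)
    (hj : S.lv z ≤ j) : S.mem (j, S.cid j z) x := by
  obtain ⟨h1, x0, h2, h3⟩ := hz
  refine ⟨hx.1.trans (h1.le.trans hj), ?_⟩
  change S.cid j x = S.cid j z
  rw [S.cid_mono hx h2 j (h1.le.trans hj)]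
  exact S.adjmem j _ _ h3 (h2.1.trans (h1.le.trans hj)) hj

theorem nb_mem' {Γ Γ' : Fin p × V} {z x : V} (hz : S.nb Γ z) (hx : S.mem Γ x)
    (hj : S.mem Γ' z) : S.mem Γ' x := by
  have := S.nb_mem hz hx Γ'.1 hj.1
  rwa [hj.2] at this

theorem gam_sub {Γ : Fin p × V} {x y : V} (hx : S.mem Γ x) (hy : S.mem (S.gam x) y) :
    S.mem Γ y := by
  refine ⟨hy.1.trans hx.1, ?_⟩
  rw [S.cid_mono hy (S.mem_gam x) Γ.1 hx.1, hx.2]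

theorem adj_mem_or_nb {Γ : Fin p × V} {x z : V} (hx : S.mem Γ x) (h : G.Adj x z) :
    S.mem Γ z ∨ S.nb Γ z := by
  by_cases hz : S.lv z ≤ Γ.1
  · exact Or.inl ⟨hz, by rw [← S.adjmem Γ.1 x z h hx.1 hz, hx.2]⟩
  · exact Or.inr ⟨lt_of_not_ge hz, x, hx, h⟩

theorem gam_eq_of_mem {Γ : Fin p × V} {y : V} (hy : S.mem Γ y) (h : S.lv y = Γ.1) :
    S.gam y = Γ := by
  unfold gam
  rw [h, hy.2]

/-- Unaffected sets are connected, in invariant form. -/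
theorem conn_inv {Γ : Fin p × V} {x y : V} (hx : S.mem Γ x) (hy : S.mem Γ y) (A : V → Prop)
    (hA : ∀ u v, S.mem Γ u → S.mem Γ v → G.Adj u v → A u → A v) (h : A x) : A y := by
  obtain ⟨w⟩ := S.conn Γ.1 x y hx.1 hy.1 (hx.2.trans hy.2.symm)
  clear hy
  induction w with
  | nil => exact h
  | cons e _ ih =>
    have h2 := e.2
    simp only [mem_filter, mem_univ, true_and, not_not] at h2
    have hm : S.mem Γ _ := ⟨h2.2, by rw [← S.adjmem Γ.1 _ _ e.1 h2.1 h2.2]; exact hx.2⟩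
    exact ih hm (hA _ _ hx hm e.1 h)

end Sch

/-- fuel recursion -/
noncomputable def sv {V : Type} [Fintype V] (deg : V → ZMod 2) (bb : V → Option V) :
    ℕ → V → ZMod 2
  | 0, y => deg y
  | k+1, y => deg y + ∑ y' ∈ univ.filter (fun y' => bb y' = some y), sv deg bb k y'

theorem sv_add {V : Type} [Fintype V] (d1 d2 : V → ZMod 2) (bb : V → Option V) (k : ℕ) (y : V) :
    sv (d1 + d2) bb k y = sv d1 bb k y + sv d2 bb k y := by
  induction k generalizing y with
  | zero => rfl
  | succ k ih =>
    simp only [sv, ih, sum_add_distrib, Pi.add_apply]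
    ring

theorem sv_stable {V : Type} [Fintype V] {p : ℕ} (lv : V → Fin p) (deg : V → ZMod 2)
    (bb : V → Option V) (hbb : ∀ y z, bb y = some z → lv y < lv z) (k k' : ℕ) (y : V)
    (h : (lv y : ℕ) ≤ k) (h' : (lv y : ℕ) ≤ k') : sv deg bb k y = sv deg bb k' y := by
  induction k generalizing y k' with
  | zero =>
    have : univ.filter (fun y' => bb y' = some y) = ∅ := by
      rw [filter_eq_empty_iff]
      intro y' _ hy
      have := hbb _ _ hy
      rw [Fin.lt_def] at this; omega
    cases k' with
    | zero => rfl
    | succ k' => simp [sv, this]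
  | succ k ih =>
    cases k' with
    | zero =>
      have : univ.filter (fun y' => bb y' = some y) = ∅ := by
        rw [filter_eq_empty_iff]
        intro y' _ hy
        have := hbb _ _ hy
        rw [Fin.lt_def] at this; omega
      simp [sv, this]
    | succ k' =>
      simp only [sv]
      congr 1
      apply sum_congr rfl
      intro y' hy
      have := hbb _ _ (mem_filter.1 hy).2
      rw [Fin.lt_def] at this
      exact ih _ _ (by omega) (by omega)

theorem sv_rec {V : Type} [Fintype V] {p : ℕ} (lv : V → Fin p) (deg : V → ZMod 2)
    (bb : V → Option V) (hbb : ∀ y z, bb y = some z → lv y < lv z) (y : V) :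
    sv deg bb p y = deg y + ∑ y' ∈ univ.filter (fun y' => bb y' = some y), sv deg bb p y' := by
  rw [sv_stable lv deg bb hbb p (p+1) y (lv y).2.le (by have := (lv y).2; omega)]
  rfl

abbrev Edg (V : Type) (p : ℕ) := V × V × Option (Fin p × V)

namespace Sch
variable {V : Type} [Fintype V] {G : SimpleGraph V} {p Δ : ℕ} (S : Sch V G p Δ)
  (W : V → Prop) (Sg : Fin p × V → Prop) (h : Edg V p → ZMod 2)

/-- structural edge (ignoring sampling) -/
def sedge (e : Edg V p) : Prop :=
  match e.2.2 with
  | none => G.Adj e.1 e.2.1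
  | some Γ => S.nb Γ e.1 ∧ S.nb Γ e.2.1

def act (e : Edg V p) : Prop :=
  W e.1 ∧ W e.2.1 ∧ S.sedge e ∧ ∀ Γ, e.2.2 = some Γ → Sg Γ

noncomputable def ind (b : Prop) : ZMod 2 := if b then 1 else 0

noncomputable def dgh (y : V) : ZMod 2 :=
  ∑ e : Edg V p, if S.act W Sg e then h e * (ind (e.1 = y) + ind (e.2.1 = y)) else 0

noncomputable def bt (Γ : Fin p × V) : Option V :=
  if hx : ∃ z, W z ∧ S.nb Γ z then some hx.choose else none

noncomputable def bb (y : V) : Option V := S.bt W (S.gam y)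

noncomputable def sc (y : V) : ZMod 2 := sv (S.dgh W Sg h) (S.bb W) p y

theorem bt_some {Γ : Fin p × V} {z : V} (hz : S.bt W Γ = some z) : W z ∧ S.nb Γ z := by
  unfold bt at hz
  split_ifs at hz with hx
  · have := hx.choose_spec
    simp only [Option.some.injEq] at hz
    rwa [hz] at this

theorem bt_none {Γ : Fin p × V} (hz : S.bt W Γ = none) (z : V) (hW : W z) : ¬ S.nb Γ z := by
  intro hn
  unfold bt at hz
  rw [dif_pos ⟨z, hW, hn⟩] at hz
  cases hz

theorem bb_lt (y z : V) (hz : S.bb W y = some z) : S.lv y < S.lv z := (S.bt_some W hz).2.1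

theorem sc_rec (y : V) : S.sc W Sg h y =
    S.dgh W Sg h y + ∑ y' ∈ univ.filter (fun y' => S.bb W y' = some y), S.sc W Sg h y' :=
  sv_rec S.lv _ _ (S.bb_lt W) y

theorem z2 (x : ZMod 2) : x + x = 0 := CharTwo.add_self_eq_zero x

theorem sum_dgh_eq_zero (C : Finset V)
    (hC : ∀ e, S.act W Sg e → (e.1 ∈ C ↔ e.2.1 ∈ C)) : ∑ y ∈ C, S.dgh W Sg h y = 0 := by
  unfold dgh
  rw [sum_comm]
  apply sum_eq_zero
  intro e _
  by_cases ha : S.act W Sg e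
  · simp only [ha, if_true]
    rw [← mul_sum, sum_add_distrib]
    simp only [ind, sum_ite_eq]
    have := hC e ha
    by_cases h1 : e.1 ∈ C
    · simp [h1, this.1 h1, z2]
    · have h2 : e.2.1 ∉ C := fun h2 => h1 (this.2 h2)
      simp [h1, h2]
  · simp [ha]

/-- swap of the double sum -/
theorem sum_bb (C : Finset V) (g : V → ZMod 2) :
    ∑ y ∈ C, ∑ y' ∈ univ.filter (fun y' => S.bb W y' = some y), g y' =
      ∑ y' ∈ univ.filter (fun y' => ∃ z ∈ C, S.bb W y' = some z), g y' := by
  rw [← sum_biUnion]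
  · congr 1
    ext y'
    simp
  · intro a _ b _ hab
    rw [Function.onFun, disjoint_left]
    intro x hx hx'
    simp only [mem_filter, mem_univ, true_and] at hx hx'
    rw [hx] at hx'
    exact hab (Option.some.inj hx')

theorem lemmaZ (Γ : Fin p × V) (hΓ : S.bt W Γ = none) :
    ∑ y ∈ univ.filter (fun y => S.gam y = Γ), S.sc W Sg h y = 0 := by
  induction hm : (Γ.1 : ℕ) using Nat.strong_induction_on generalizing Γ with
  | _ m ih =>
  set C := univ.filter (fun y => S.mem Γ y) with hC
  have hCm : ∀ y, y ∈ C ↔ S.mem Γ y := by simp [hC]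
  have hcl : ∀ x z, W z → S.mem Γ x → G.Adj x z → S.mem Γ z := fun x z hW hx hxz =>
    (S.adj_mem_or_nb hx hxz).resolve_right (S.bt_none W hΓ z hW)
  have hhalf : ∀ (x z : V) (o : Option (Fin p × V)), W z → S.sedge (x, z, o) → S.mem Γ x →
      S.mem Γ z := by
    intro x z o hW he hx
    cases o with
    | none => exact hcl x z hW hx he
    | some Γ' =>
      obtain ⟨y0, h1, h2⟩ := he.2.2
      exact hcl y0 z hW (S.nb_mem' he.1 h1 hx) h2
  have hsy : ∀ (x z : V) (o : Option (Fin p × V)), S.sedge (x, z, o) → S.sedge (z, x, o) := by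
    intro x z o he
    cases o with
    | none => exact SimpleGraph.Adj.symm he
    | some Γ' => exact ⟨he.2, he.1⟩
  have h0 : ∑ y ∈ C, S.dgh W Sg h y = 0 := by
    apply S.sum_dgh_eq_zero
    rintro ⟨x, z, o⟩ he
    rw [hCm, hCm]
    exact ⟨hhalf x z o he.2.1 he.2.2.1, hhalf z x o he.1 (hsy _ _ _ he.2.2.1)⟩
  have h1 : ∑ y ∈ C, S.sc W Sg h y = ∑ y ∈ C, S.dgh W Sg h y +
      ∑ y ∈ C, ∑ y' ∈ univ.filter (fun y' => S.bb W y' = some y), S.sc W Sg h y' := by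
    rw [← sum_add_distrib]
    exact sum_congr rfl (fun y _ => S.sc_rec W Sg h y)
  rw [h0, zero_add, S.sum_bb] at h1
  have h2 : univ.filter (fun y' => ∃ z ∈ C, S.bb W y' = some z) =
      C.filter (fun y' => ¬ S.bb W y' = none) := by
    ext y'
    simp only [mem_filter, mem_univ, true_and, hCm]
    constructor
    · rintro ⟨z, hz, hb⟩
      refine ⟨S.nb_mem' (S.bt_some W hb).2 (S.mem_gam y') hz, by simp [hb]⟩
    · rintro ⟨hy, hb⟩
      obtain ⟨z, hz⟩ := Option.ne_none_iff_exists'.1 hb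
      obtain ⟨hW, _, x0, hx0, hadj⟩ := S.bt_some W hz
      exact ⟨z, hcl x0 z hW (S.gam_sub hy hx0) hadj, hz⟩
  rw [h2, ← sum_filter_add_sum_filter_not C (fun y' => S.bb W y' = none)] at h1
  have h3 : ∑ y ∈ C.filter (fun y' => S.bb W y' = none), S.sc W Sg h y = 0 := by
    simpa using h1
  rw [← sum_fiberwise_of_maps_to (t := univ) (g := S.gam) (fun _ _ => mem_univ _),
    sum_eq_single Γ] at h3
  · rw [← h3]
    apply sum_congr _ (fun _ _ => rfl)
    ext y
    simp only [mem_filter, mem_univ, true_and, hCm]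
    constructor
    · intro hy
      exact ⟨⟨hy ▸ S.mem_gam y, by unfold bb; rw [hy, hΓ]⟩, hy⟩
    · exact fun hy => hy.2
  · intro Γ' _ hne
    by_cases hex : ∃ y, S.mem Γ y ∧ S.bb W y = none ∧ S.gam y = Γ'
    · obtain ⟨y, hy, hb, hg⟩ := hex
      have hlt : (Γ'.1 : ℕ) < m := by
        rw [← hm, ← hg]
        refine lt_of_le_of_ne hy.1 (fun h => hne ?_)
        rw [← hg]
        exact S.gam_eq_of_mem hy (Fin.ext h)
      have hb' : S.bt W Γ' = none := by rw [← hg]; exact hb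
      rw [← ih _ hlt Γ' hb' rfl]
      apply sum_congr _ (fun _ _ => rfl)
      ext y2
      simp only [mem_filter, mem_univ, true_and, hCm]
      constructor
      · exact fun h => h.2
      · intro h
        refine ⟨⟨?_, by unfold bb; rw [h, hb']⟩, h⟩
        apply S.gam_sub hy
        rw [hg, ← h]; exact S.mem_gam y2
    · apply sum_eq_zero
      intro y hy
      simp only [mem_filter, hCm] at hy
      exact absurd ⟨y, hy.1.1, hy.1.2, hy.2⟩ hex
  · intro h; simp at h

end Sch
end VF

namespace VF
open Finset
open scoped Classical
namespace Sch
variable {V : Type} [Fintype V] {G : SimpleGraph V} {p Δ : ℕ} (S : Sch V G p Δ)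
  (W : V → Prop) (Sg : Fin p × V → Prop) (h : Edg V p → ZMod 2)

/-- affected by a set of vertices -/
def aff (Fs : Finset V) (Γ : Fin p × V) : Prop := ∃ w ∈ Fs, S.mem Γ w

noncomputable def ab (a : V → ZMod 2) (o : Option V) : ZMod 2 :=
  match o with
  | none => 0
  | some z => a z

noncomputable def asum (Fs : Finset V) (a : V → ZMod 2) : ZMod 2 :=
  ∑ y, a y * S.sc W Sg h y +
    ∑ y ∈ univ.filter (fun y => S.aff Fs (S.gam y)), ab a (S.bb W y) * S.sc W Sg h y

/-- Generic form of identity (A). -/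
theorem asum_gen (Fs : Finset V) (a σ δ : V → ZMod 2)
    (hσ : ∀ y, σ y = δ y + ∑ y' ∈ univ.filter (fun y' => S.bb W y' = some y), σ y') :
    ∑ y, a y * σ y + ∑ y ∈ univ.filter (fun y => S.aff Fs (S.gam y)), ab a (S.bb W y) * σ y =
    ∑ y, a y * δ y + ∑ y ∈ univ.filter (fun y => ¬ S.aff Fs (S.gam y)), ab a (S.bb W y) * σ y := by
  have h1 : ∑ y, a y * σ y = ∑ y, a y * δ y + ∑ y, ab a (S.bb W y) * σ y := by
    have : ∀ y, a y * σ y = a y * δ y +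
        ∑ y', (if S.bb W y' = some y then a y * σ y' else 0) := by
      intro y
      conv_lhs => rw [hσ y]
      rw [mul_add, mul_sum, ← sum_filter]
    rw [sum_congr rfl (fun y _ => this y), sum_add_distrib, sum_comm]
    congr 1
    apply sum_congr rfl
    intro y _
    cases hb : S.bb W y with
    | none => simp [ab]
    | some z => simp [ab]
  rw [h1, ← sum_filter_add_sum_filter_not univ (fun y => S.aff Fs (S.gam y))
    (fun y => ab a (S.bb W y) * σ y)]
  have := z2 (∑ y ∈ univ.filter (fun y => S.aff Fs (S.gam y)), ab a (S.bb W y) * σ y)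
  linear_combination this

theorem aff_of_bb (Fs : Finset V) {y z : V} (hb : S.bb W y = some z)
    (hy : S.aff Fs (S.gam y)) : S.aff Fs (S.gam z) := by
  obtain ⟨w, hw, hm⟩ := hy
  exact ⟨w, hw, S.nb_mem' (S.bt_some W hb).2 hm (S.mem_gam z)⟩

theorem aff_of_mem (Fs : Finset V) {Γ : Fin p × V} {y : V} (hm : S.mem Γ y)
    (hy : S.aff Fs (S.gam y)) : S.aff Fs Γ := by
  obtain ⟨w, hw, hm'⟩ := hy
  exact ⟨w, hw, S.gam_sub hm hm'⟩

theorem dgh_add (h' : Edg V p → ZMod 2) :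
    S.dgh W Sg (h + h') = S.dgh W Sg h + S.dgh W Sg h' := by
  funext y
  simp only [dgh, Pi.add_apply, ← sum_add_distrib]
  apply sum_congr rfl
  intro e _
  split_ifs
  · ring
  · simp

/-- Detection -/
theorem detect (Fs : Finset V) (a : V → ZMod 2) (e : Edg V p) (he : S.act W Sg e)
    (hx : S.aff Fs (S.gam e.1)) (hz : S.aff Fs (S.gam e.2.1)) (hax : a e.1 = 1)
    (haz : a e.2.1 = 0) :
    S.asum W Sg (h + Pi.single e 1) Fs a = S.asum W Sg h Fs a + 1 := by
  set δ : V → ZMod 2 := S.dgh W Sg (Pi.single e 1) with hδ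
  have hδv : ∀ y, δ y = ind (e.1 = y) + ind (e.2.1 = y) := by
    intro y
    simp only [hδ, dgh]
    rw [sum_eq_single e]
    · simp [he]
    · intro e' _ hne
      simp [Pi.single_apply, hne]
    · simp
  set σ : V → ZMod 2 := S.sc W Sg (Pi.single e 1) with hσd
  have hs : ∀ y, S.sc W Sg (h + Pi.single e 1) y = S.sc W Sg h y + σ y := by
    intro y
    simp only [sc, hσd]
    rw [S.dgh_add, sv_add]
  have hσ := S.sc_rec W Sg (Pi.single e 1)
  have hgen := S.asum_gen W Fs a σ δ hσ
  have hvan : ∀ y, ¬ S.aff Fs (S.gam y) → σ y = 0 := by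
    intro y
    induction hm : (S.lv y : ℕ) using Nat.strong_induction_on generalizing y with
    | _ m ih =>
      intro hy
      rw [show σ y = _ from hσ y, ← hδ, hδv]
      have n1 : e.1 ≠ y := fun h => hy (h ▸ hx)
      have n2 : e.2.1 ≠ y := fun h => hy (h ▸ hz)
      simp only [ind, n1, n2, if_false, zero_add]
      apply sum_eq_zero
      intro y' hy'
      have hb := (mem_filter.1 hy').2
      exact ih _ (by rw [← hm]; exact S.bb_lt W _ _ hb) y' rfl
        (fun h => hy (S.aff_of_bb W Fs hb h))
  have h0 : ∑ y ∈ univ.filter (fun y => ¬ S.aff Fs (S.gam y)), ab a (S.bb W y) * σ y = 0 := by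
    apply sum_eq_zero
    intro y hy
    rw [hvan y (mem_filter.1 hy).2, mul_zero]
  have h1 : ∑ y, a y * δ y = 1 := by
    simp only [hδv, mul_add, sum_add_distrib, ind, mul_ite, mul_one, mul_zero, sum_ite_eq,
      mem_univ, if_true, hax, haz, add_zero]
  rw [h0, h1, add_zero] at hgen
  unfold asum
  simp only [hs, mul_add, sum_add_distrib]
  linear_combination hgen

/-- Validity -/
theorem valid (F Fs : Finset V) (hF : F ⊆ Fs) (A : Finset V) (hAF : ∀ x ∈ A, x ∉ F)
    (hA : ∀ x y, G.Adj x y → x ∉ F → y ∉ F → x ∈ A → y ∈ A)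
    (a : V → ZMod 2) (ha : ∀ y, a y = ind (S.aff Fs (S.gam y) ∧ y ∈ A))
    (hW : ∀ x ∈ F, ¬ W x) (hSg : ∀ Γ, S.aff Fs Γ → ¬ Sg Γ) :
    S.asum W Sg h Fs a = 0 := by
  have hnF : ∀ Γ x, ¬ S.aff Fs Γ → S.mem Γ x → x ∉ F := fun Γ x h1 h2 h3 =>
    h1 ⟨x, hF h3, h2⟩
  have hin : ∀ Γ x y, ¬ S.aff Fs Γ → S.mem Γ x → S.mem Γ y → x ∈ A → y ∈ A := by
    intro Γ x y hΓ hx hy hxA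
    exact S.conn_inv hx hy (fun v => v ∈ A) (fun u v hu hv huv huA =>
      hA u v huv (hnF Γ u hΓ hu) (hnF Γ v hΓ hv) huA) hxA
  have hnbi : ∀ Γ x z, ¬ S.aff Fs Γ → S.mem Γ x → S.nb Γ z → z ∉ F → (x ∈ A ↔ z ∈ A) := by
    intro Γ x z hΓ hx hz hzF
    obtain ⟨_, x0, h1, h2⟩ := hz
    have h1F := hnF Γ x0 hΓ h1
    constructor
    · intro h
      exact hA x0 z h2 h1F hzF (hin Γ x x0 hΓ hx h1 h)
    · intro h
      exact hin Γ x0 x hΓ h1 hx (hA z x0 h2.symm hzF h1F h)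
  have hdeg : ∑ y ∈ A, S.dgh W Sg h y = 0 := by
    apply S.sum_dgh_eq_zero
    rintro ⟨x, z, o⟩ ⟨h1, h2, h3, h4⟩
    have hxF : x ∉ F := fun h => hW x h h1
    have hzF : z ∉ F := fun h => hW z h h2
    cases o with
    | none => exact ⟨hA x z h3 hxF hzF, hA z x (SimpleGraph.Adj.symm h3) hzF hxF⟩
    | some Γ =>
      have hΓ : ¬ S.aff Fs Γ := fun h => hSg Γ h (h4 Γ rfl)
      obtain ⟨_, x0, e1, e2⟩ := h3.1
      exact (hnbi Γ x0 x hΓ e1 h3.1 hxF).symm.trans (hnbi Γ x0 z hΓ e1 h3.2 hzF)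
  unfold asum
  rw [S.asum_gen W Fs a _ _ (S.sc_rec W Sg h)]
  set Nn := univ.filter (fun y => ¬ S.aff Fs (S.gam y)) with hNn
  have t1 : ∑ y, a y * S.dgh W Sg h y = ∑ y ∈ A.filter (fun y => ¬ S.aff Fs (S.gam y)),
      S.dgh W Sg h y := by
    have e1 : ∑ y, a y * S.dgh W Sg h y = ∑ y ∈ A.filter (fun y => S.aff Fs (S.gam y)),
        S.dgh W Sg h y := by
      simp only [ha, ind, ite_mul, one_mul, zero_mul]
      rw [← sum_filter]
      apply sum_congr _ (fun _ _ => rfl)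
      ext y; simp [and_comm]
    rw [e1]
    rw [← sum_filter_add_sum_filter_not A (fun y => S.aff Fs (S.gam y))] at hdeg
    exact CharTwo.add_eq_zero.1 hdeg
  set AN := A.filter (fun y => ¬ S.aff Fs (S.gam y)) with hAN
  have t2 : ∑ y ∈ AN, S.dgh W Sg h y = ∑ y ∈ AN, S.sc W Sg h y +
      ∑ y ∈ AN, ∑ y' ∈ univ.filter (fun y' => S.bb W y' = some y), S.sc W Sg h y' := by
    rw [← sum_add_distrib]
    apply sum_congr rfl
    intro y _
    rw [S.sc_rec W Sg h y, add_assoc, z2, add_zero]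
  rw [S.sum_bb] at t2
  have t3 : ∑ y ∈ Nn, ab a (S.bb W y) * S.sc W Sg h y =
      ∑ y ∈ Nn.filter (fun y => ∃ z, S.bb W y = some z ∧ S.aff Fs (S.gam z) ∧ z ∈ A),
        S.sc W Sg h y := by
    rw [sum_filter (s := Nn)]
    apply sum_congr rfl
    intro y _
    cases hb : S.bb W y with
    | none => simp [ab]
    | some z => simp [ab, ha, ind]
  have t4 : univ.filter (fun y' => ∃ z ∈ AN, S.bb W y' = some z) =
      Nn.filter (fun y => ∃ z, S.bb W y = some z ∧ ¬ S.aff Fs (S.gam z) ∧ z ∈ A) := by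
    ext y
    simp only [hNn, hAN, mem_filter, mem_univ, true_and]
    constructor
    · rintro ⟨z, ⟨h1, h2⟩, h3⟩
      exact ⟨fun h => h2 (S.aff_of_bb W Fs h3 h), z, h3, h2, h1⟩
    · rintro ⟨_, z, h1, h2, h3⟩
      exact ⟨z, ⟨h3, h2⟩, h1⟩
  have t5 : ∑ y ∈ Nn.filter (fun y => ∃ z, S.bb W y = some z ∧ ¬ S.aff Fs (S.gam z) ∧ z ∈ A),
        S.sc W Sg h y +
      ∑ y ∈ Nn.filter (fun y => ∃ z, S.bb W y = some z ∧ S.aff Fs (S.gam z) ∧ z ∈ A),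
        S.sc W Sg h y = ∑ y ∈ AN.filter (fun y => ¬ S.bb W y = none), S.sc W Sg h y := by
    rw [← sum_union]
    · apply sum_congr _ (fun _ _ => rfl)
      ext y
      simp only [hNn, hAN, mem_union, mem_filter, mem_univ, true_and]
      have key : ∀ z, S.bb W y = some z → ¬ S.aff Fs (S.gam y) → (y ∈ A ↔ z ∈ A) := by
        intro z hz hy
        obtain ⟨hWz, hn⟩ := S.bt_some W hz
        exact hnbi _ y z hy (S.mem_gam y) hn (fun h => hW z h hWz)
      constructor
      · rintro (⟨h1, z, h2, h3, h4⟩ | ⟨h1, z, h2, h3, h4⟩)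
        · exact ⟨⟨(key z h2 h1).2 h4, h1⟩, by simp [h2]⟩
        · exact ⟨⟨(key z h2 h1).2 h4, h1⟩, by simp [h2]⟩
      · rintro ⟨⟨h1, h2⟩, h3⟩
        obtain ⟨z, hz⟩ := Option.ne_none_iff_exists'.1 h3
        have hzA := (key z hz h2).1 h1
        by_cases hza : S.aff Fs (S.gam z)
        · exact Or.inr ⟨h2, z, hz, hza, hzA⟩
        · exact Or.inl ⟨h2, z, hz, hza, hzA⟩
    · rw [disjoint_left]
      intro y hy hy'
      simp only [mem_filter] at hy hy'
      obtain ⟨_, z, e1, e2, _⟩ := hy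
      obtain ⟨_, z', e1', e2', _⟩ := hy'
      rw [e1] at e1'
      exact e2 (Option.some.inj e1' ▸ e2')
  rw [t1, t2, t4, t3, add_assoc, t5,
    ← sum_filter_add_sum_filter_not AN (fun y => S.bb W y = none), add_assoc, z2, add_zero]
  rw [← sum_fiberwise_of_maps_to (t := univ) (g := S.gam) (fun _ _ => mem_univ _)]
  apply sum_eq_zero
  intro Γ _
  by_cases hex : ∃ y, y ∈ A ∧ ¬ S.aff Fs (S.gam y) ∧ S.bb W y = none ∧ S.gam y = Γ
  · obtain ⟨y, h1, h2, h3, h4⟩ := hex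
    have hb : S.bt W Γ = none := by rw [← h4]; exact h3
    rw [← S.lemmaZ W Sg h Γ hb]
    apply sum_congr _ (fun _ _ => rfl)
    ext y2
    simp only [hAN, mem_filter, mem_univ, true_and]
    constructor
    · exact fun h => h.2
    · intro h5
      refine ⟨⟨⟨?_, ?_⟩, ?_⟩, h5⟩
      · exact hin Γ y y2 (h4 ▸ h2) (h4 ▸ S.mem_gam y) (h5 ▸ S.mem_gam y2) h1
      · rw [h5, ← h4]; exact h2
      · unfold bb; rw [h5, hb]
  · apply sum_eq_zero
    intro y hy
    simp only [hAN, mem_filter] at hy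
    exact absurd ⟨y, hy.1.1.1, hy.1.1.2, hy.1.2, hy.2⟩ hex

/-- If there is no crossing edge then connectivity propagates. -/
theorem closure_prop (F Fs : Finset V) (a : V → ZMod 2)
    (haff : ∀ x, a x = 1 → S.aff Fs (S.gam x))
    (hno : ∀ e : Edg V p, S.sedge e → (∀ Γ, e.2.2 = some Γ → ¬ S.aff Fs Γ) → a e.1 = 1 →
      e.1 ∉ F → e.2.1 ∉ F → S.aff Fs (S.gam e.2.1) → a e.2.1 = 1)
    (s t : V) (hs : a s = 1) (hsF : s ∉ F) (ht : S.aff Fs (S.gam t))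
    (haF : ∀ x, a x = 1 → x ∉ F)
    (hr : (rs G F).Reachable s t) : a t = 1 := by
  set Ac : V → Prop := fun y => a y = 1 ∨ (¬ S.aff Fs (S.gam y) ∧ ∃ Γ, ¬ S.aff Fs Γ ∧ S.mem Γ y ∧
    ∃ x, a x = 1 ∧ S.nb Γ x) with hAc
  have hstep : ∀ u v, (rs G F).Adj u v → Ac u → Ac v := by
    rintro u v ⟨huv, huF, hvF⟩ hu
    by_cases hv : S.aff Fs (S.gam v)
    · left
      rcases hu with hu | ⟨_, Γ, h1, h2, x, h3, h4⟩
      · exact hno (u, v, none) huv (by simp) hu huF hvF hv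
      · rcases S.adj_mem_or_nb h2 huv with h5 | h5
        · exact absurd (S.aff_of_mem Fs h5 hv) h1
        · exact hno (x, v, some Γ) ⟨h4, h5⟩ (by simpa using h1) h3 (haF x h3) hvF hv
    · right
      refine ⟨hv, ?_⟩
      rcases hu with hu | ⟨_, Γ, h1, h2, x, h3, h4⟩
      · refine ⟨S.gam v, hv, S.mem_gam v, u, hu, ?_⟩
        rcases S.adj_mem_or_nb (S.mem_gam v) huv.symm with h5 | h5
        · exact absurd (S.aff_of_mem Fs h5 (haff u hu)) hv
        · exact h5
      · rcases S.adj_mem_or_nb h2 huv with h5 | h5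
        · exact ⟨Γ, h1, h5, x, h3, h4⟩
        · refine ⟨S.gam v, hv, S.mem_gam v, x, h3, ?_⟩
          obtain ⟨_, x0, h6, h7⟩ := h4
          rcases S.adj_mem_or_nb (S.nb_mem' h5 h6 (S.mem_gam v)) h7 with h8 | h8
          · exact absurd (S.aff_of_mem Fs h8 (haff x h3)) hv
          · exact h8
  have hfin : Ac t := by
    have h0 : Ac s := Or.inl hs
    clear hs hsF
    obtain ⟨w⟩ := hr
    induction w with
    | nil => exact h0
    | cons e _ ih => exact ih ht (hstep _ _ e h0)
  rcases hfin with h | h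
  · exact h
  · exact absurd ht h.1

end Sch
end VF

namespace VF
open Finset
open scoped Classical

theorem exists_Sch {V : Type} [Fintype V] (G : SimpleGraph V) (p : ℕ)
    (hp : Fintype.card V < 2 ^ p) : Nonempty (Sch V G p (2 * p + 60)) := by
  obtain ⟨D, h0, hanti, hDp, hcc⟩ := hierarchy G p hp
  have hex : ∀ v, ∃ i, v ∉ D (i+1) := fun v => ⟨p, fun h => by
    have := hanti (Nat.le_succ p) h
    rw [hDp] at this; simp at this⟩
  have hlt : ∀ v, Nat.find (hex v) < p := by
    intro v
    by_cases hp0 : p = 0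
    · subst hp0
      rw [h0] at hDp
      have := mem_univ v
      rw [hDp] at this; simp at this
    · have : Nat.find (hex v) ≤ p - 1 := Nat.find_min' _ (by
        rw [show p - 1 + 1 = p by omega, hDp]; simp)
      omega
  set lv : V → Fin p := fun v => ⟨Nat.find (hex v), hlt v⟩ with hlv
  have hle : ∀ v (j : Fin p), lv v ≤ j ↔ v ∉ D (j+1) := by
    intro v j
    constructor
    · intro h h2
      exact Nat.find_spec (hex v) (hanti (show Nat.find (hex v) + 1 ≤ j + 1 by
        have : (lv v : ℕ) ≤ j := h
        simp only [hlv] at this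
        omega) h2)
    · intro h
      exact Nat.find_min' (hex v) h
  have hmemD : ∀ v, v ∈ D (lv v) := by
    intro v
    by_cases hz : (lv v : ℕ) = 0
    · rw [hz, h0]; simp
    · have := Nat.find_min (hex v) (m := (lv v : ℕ) - 1) (by
        change (lv v : ℕ) - 1 < (lv v : ℕ); omega)
      rw [not_not, show (lv v : ℕ) - 1 + 1 = lv v by omega] at this
      exact this
  have hR : ∀ j : Fin p, univ.filter (fun v => ¬ lv v ≤ j) = D (j+1) := by
    intro j; ext v; simp [hle]
  set R : Fin p → SimpleGraph V := fun j => rs G (D (j+1)) with hRd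
  have hlists : ∀ j : Fin p, ∃ lst : V → List V, ∀ u, (lst u).IsChain (R j).Adj ∧
      (∀ x ∈ lst u, (R j).Reachable u x) ∧
      (∀ w ∈ D j \ D (j+1), (R j).Reachable u w → w ∈ lst u) ∧
      ∀ x, (lst u).count x ≤ 2 * p + 60 := by
    intro j
    apply exists_lists _ _ p hp
    intro X
    have h1 := hcc j X
    have e : rs (R j) X = rs G (D (j+1) ∪ X) := by
      ext u v
      simp only [hRd, rs, mem_union]
      tauto
    unfold cc at h1
    rw [e, sdiff_sdiff_left]
    exact h1
  choose lst0 hl1 hl2 hl3 hl4 using hlists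
  set cid : Fin p → V → V := fun j v => ((R j).connectedComponentMk v).out with hcid
  have hcr : ∀ j v, (R j).Reachable (cid j v) v := by
    intro j v
    apply SimpleGraph.ConnectedComponent.eq.1
    exact Quot.out_eq _
  have hce : ∀ j u v, (R j).Reachable u v → cid j u = cid j v := by
    intro j u v h
    simp only [hcid]
    rw [SimpleGraph.ConnectedComponent.eq.2 h]
  have hup : ∀ j u v, (R j).Reachable u v → lv u ≤ j → lv v ≤ j := by
    rintro j u v ⟨w⟩ hu
    induction w with
    | nil => exact hu
    | cons e _ ih => exact ih ((hle _ _).2 e.2.2)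
  refine ⟨⟨lv, cid, fun Γ => if lv Γ.2 ≤ Γ.1 ∧ cid Γ.1 Γ.2 = Γ.2 then lst0 Γ.1 Γ.2 else [],
    ?_, ?_, ?_, ?_, ?_, ?_⟩⟩
  · intro j x y hxy hx hy
    exact hce j x y (SimpleGraph.Adj.reachable ⟨hxy, (hle _ _).1 hx, (hle _ _).1 hy⟩)
  · intro j x y hx hy hxy
    rw [hR]
    exact (hcr j x).symm.trans (hxy ▸ hcr j y)
  · intro Γ
    split_ifs
    · exact (hl1 _ _).imp (fun a b h => h.1)
    · exact List.IsChain.nil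
  · intro Γ x hx
    split_ifs at hx with h
    · have hr := hl2 _ _ x hx
      exact ⟨hup _ _ _ hr h.1, by rw [← hce _ _ _ hr, h.2]⟩
    · simp at hx
  · intro y
    have h1 : lv (cid (lv y) y) ≤ lv y := hup _ _ _ (hcr (lv y) y).symm le_rfl
    have h2 : cid (lv y) (cid (lv y) y) = cid (lv y) y := hce _ _ _ (hcr (lv y) y)
    simp only
    rw [if_pos ⟨h1, h2⟩]
    apply hl3 _ _ _ _ (hcr (lv y) y)
    rw [mem_sdiff]
    exact ⟨hmemD y, (hle y (lv y)).1 le_rfl⟩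
  · intro Γ x
    split_ifs
    · exact hl4 _ _ _
    · simp
end VF

namespace VF
open Finset
open scoped Classical
namespace Sch
variable {V : Type} [Fintype V] {G : SimpleGraph V} {p Δ : ℕ} (S : Sch V G p Δ)
  (W : V → Prop) (Sg : Fin p × V → Prop) (h : Edg V p → ZMod 2)

noncomputable def pos (y : V) : ℕ := (S.lst (S.gam y)).idxOf y

theorem pos_lt (y : V) : S.pos y < (S.lst (S.gam y)).length :=
  List.idxOf_lt_length_iff.2 (S.mem_lst y)

theorem get_pos (y : V) : (S.lst (S.gam y))[S.pos y]? = some y := by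
  rw [List.getElem?_eq_getElem (S.pos_lt y)]
  simp [pos]

noncomputable def avec (α : Fin p × V → ℕ → ZMod 2) (y : V) : ZMod 2 := α (S.gam y) (S.pos y)

noncomputable def pre (Γ : Fin p × V) (i : ℕ) : ZMod 2 :=
  ∑ y ∈ univ.filter (fun y => S.gam y = Γ ∧ S.pos y < i), S.sc W Sg h y

theorem pre_zero (Γ : Fin p × V) : S.pre W Sg h Γ 0 = 0 := by
  simp [pre]

theorem pre_len (Γ : Fin p × V) : S.pre W Sg h Γ (S.lst Γ).length =
    ∑ y ∈ univ.filter (fun y => S.gam y = Γ), S.sc W Sg h y := by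
  unfold pre
  apply sum_congr _ (fun _ _ => rfl)
  ext y
  simp only [mem_filter, mem_univ, true_and, and_iff_left_iff_imp]
  rintro rfl
  exact S.pos_lt y

theorem pre_succ (Γ : Fin p × V) (i : ℕ) : S.pre W Sg h Γ (i+1) = S.pre W Sg h Γ i +
    ∑ y ∈ univ.filter (fun y => S.gam y = Γ ∧ S.pos y = i), S.sc W Sg h y := by
  unfold pre
  rw [← sum_union]
  · apply sum_congr _ (fun _ _ => rfl)
    ext y
    simp only [mem_filter, mem_univ, true_and, mem_union, Nat.lt_succ_iff_lt_or_eq]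
    tauto
  · rw [disjoint_filter]
    rintro y _ ⟨_, h1⟩ ⟨_, h2⟩
    omega

theorem asum_eq (Fs : Finset V) (α : Fin p × V → ℕ → ZMod 2)
    (h0 : ∀ Γ i, ¬ S.aff Fs Γ → α Γ i = 0) :
    S.asum W Sg h Fs (S.avec α) = ∑ Γ ∈ univ.filter (fun Γ => S.aff Fs Γ),
      (∑ i ∈ range (S.lst Γ).length, α Γ i * (S.pre W Sg h Γ (i+1) + S.pre W Sg h Γ i) +
        ab (S.avec α) (S.bt W Γ) * S.pre W Sg h Γ (S.lst Γ).length) := by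
  unfold asum
  rw [sum_add_distrib]
  congr 1
  · have h1 : ∀ Γ i, α Γ i * (S.pre W Sg h Γ (i+1) + S.pre W Sg h Γ i) =
        ∑ y ∈ univ.filter (fun y => S.gam y = Γ ∧ S.pos y = i), α Γ i * S.sc W Sg h y := by
      intro Γ i
      rw [pre_succ, ← mul_sum]
      have := z2 (S.pre W Sg h Γ i)
      linear_combination α Γ i * this
    have h2 : ∀ Γ, ∑ i ∈ range (S.lst Γ).length,
        α Γ i * (S.pre W Sg h Γ (i+1) + S.pre W Sg h Γ i) =
        ∑ y ∈ univ.filter (fun y => S.gam y = Γ), S.avec α y * S.sc W Sg h y := by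
      intro Γ
      rw [sum_congr rfl (fun i _ => h1 Γ i)]
      rw [← sum_fiberwise_of_maps_to (s := univ.filter (fun y => S.gam y = Γ))
        (t := range (S.lst Γ).length) (g := S.pos)]
      · apply sum_congr rfl
        intro i _
        rw [filter_filter]
        apply sum_congr rfl
        intro y hy
        simp only [mem_filter, mem_univ, true_and] at hy
        rw [avec, hy.1, hy.2]
      · intro y hy
        simp only [mem_filter, mem_univ, true_and] at hy
        rw [mem_range, ← hy]
        exact S.pos_lt y
    rw [sum_congr rfl (fun Γ _ => h2 Γ)]
    rw [← sum_fiberwise_of_maps_to (s := univ) (t := univ) (g := S.gam) (fun _ _ => mem_univ _)]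
    symm
    apply sum_subset (filter_subset _ _)
    intro Γ _ hΓ
    simp only [mem_filter, mem_univ, true_and] at hΓ
    apply sum_eq_zero
    intro y hy
    simp only [mem_filter, mem_univ, true_and] at hy
    rw [avec, hy, h0 _ _ hΓ, zero_mul]
  · rw [← sum_fiberwise_of_maps_to (s := univ.filter (fun y => S.aff Fs (S.gam y)))
      (t := univ.filter (fun Γ => S.aff Fs Γ)) (g := S.gam)]
    · apply sum_congr rfl
      intro Γ hΓ
      simp only [mem_filter, mem_univ, true_and] at hΓ
      rw [pre_len, mul_sum, filter_filter]
      apply sum_congr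
      · ext y
        simp only [mem_filter, mem_univ, true_and, and_iff_right_iff_imp]
        rintro rfl
        exact hΓ
      · intro y hy
        simp only [mem_filter, mem_univ, true_and] at hy
        rw [bb, hy]
    · intro y hy
      simpa using hy

end Sch

theorem tele (L : ℕ) (α T : ℕ → ZMod 2) (h0 : T 0 = 0) (hL : T L = 0)
    (h : ∀ i, i + 1 < L → α i * T (i+1) = α (i+1) * T (i+1)) :
    ∑ i ∈ range L, α i * (T (i+1) + T i) = 0 := by
  have key : ∀ k, k + 1 ≤ L → ∑ i ∈ range (k+1), α i * (T (i+1) + T i) = α k * T (k+1) := by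
    intro k
    induction k with
    | zero => intro _; simp [h0]
    | succ k ih =>
      intro hk
      rw [sum_range_succ, ih (by omega), h k (by omega)]
      have := Sch.z2 (α (k+1) * T (k+1))
      linear_combination this
  cases L with
  | zero => simp
  | succ L => rw [key L le_rfl, hL, mul_zero]

namespace Sch
variable {V : Type} [Fintype V] {p Δ : ℕ}

structure Valid {G : SimpleGraph V} (S : Sch V G p Δ) (F Fs : Finset V)
    (α : Fin p × V → ℕ → ZMod 2) : Prop where
  zero : ∀ Γ i, ¬ S.aff Fs Γ → α Γ i = 0
  fz : ∀ Γ i x, x ∈ F → (S.lst Γ)[i]? = some x → α Γ i = 0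
  const : ∀ Γ i, i + 1 < (S.lst Γ).length → (∀ w ∈ Fs, (S.lst Γ)[i]? ≠ some w) →
    (∀ w ∈ Fs, (S.lst Γ)[i+1]? ≠ some w) → α Γ i = α Γ (i+1)

/-- seed-independent agreement -/
structure Agr {G₁ G₂ : SimpleGraph V} (S₁ : Sch V G₁ p Δ) (S₂ : Sch V G₂ p Δ)
    (Fs : Finset V) : Prop where
  gam : ∀ w ∈ Fs, S₁.gam w = S₂.gam w
  pos : ∀ w ∈ Fs, S₁.pos w = S₂.pos w
  aff : ∀ Γ, S₁.aff Fs Γ ↔ S₂.aff Fs Γ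
  len : ∀ Γ, S₁.aff Fs Γ → (S₁.lst Γ).length = (S₂.lst Γ).length
  ps : ∀ Γ, S₁.aff Fs Γ → ∀ w ∈ Fs, ∀ i : ℕ, (S₁.lst Γ)[i]? = some w ↔ (S₂.lst Γ)[i]? = some w

noncomputable def loc {G : SimpleGraph V} (S : Sch V G p Δ) (W : V → Prop) (Γ : Fin p × V) :
    Option ((Fin p × V) × ℕ) := (S.bt W Γ).map (fun z => (S.gam z, S.pos z))

structure AgrS {G₁ G₂ : SimpleGraph V} (S₁ : Sch V G₁ p Δ) (S₂ : Sch V G₂ p Δ)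
    (Fs : Finset V) (W₁ W₂ : V → Prop) (Sg₁ Sg₂ : Fin p × V → Prop)
    (h₁ h₂ : Edg V p → ZMod 2) : Prop where
  W : ∀ w ∈ Fs, W₁ w ↔ W₂ w
  Sg : ∀ Γ, S₁.aff Fs Γ → (Sg₁ Γ ↔ Sg₂ Γ)
  loc : ∀ Γ, S₁.aff Fs Γ → S₁.loc W₁ Γ = S₂.loc W₂ Γ
  plen : ∀ Γ, S₁.aff Fs Γ → S₁.pre W₁ Sg₁ h₁ Γ (S₁.lst Γ).length =
    S₂.pre W₂ Sg₂ h₂ Γ (S₂.lst Γ).length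
  p0 : ∀ Γ, S₁.aff Fs Γ → ∀ w ∈ Fs, ∀ i, (S₁.lst Γ)[i]? = some w →
    S₁.pre W₁ Sg₁ h₁ Γ i = S₂.pre W₂ Sg₂ h₂ Γ i
  p1 : ∀ Γ, S₁.aff Fs Γ → ∀ w ∈ Fs, ∀ i, (S₁.lst Γ)[i]? = some w →
    S₁.pre W₁ Sg₁ h₁ Γ (i+1) = S₂.pre W₂ Sg₂ h₂ Γ (i+1)

variable {G₁ G₂ : SimpleGraph V} {S₁ : Sch V G₁ p Δ} {S₂ : Sch V G₂ p Δ} {F Fs : Finset V}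
  {α : Fin p × V → ℕ → ZMod 2}

theorem Valid.transfer (hA : Agr S₁ S₂ Fs) (hF : F ⊆ Fs) (hv : S₁.Valid F Fs α) :
    S₂.Valid F Fs α := by
  refine ⟨fun Γ i h => hv.zero Γ i (by rwa [hA.aff]), ?_, ?_⟩
  · intro Γ i x hx hi
    by_cases ha : S₁.aff Fs Γ
    · exact hv.fz Γ i x hx ((hA.ps Γ ha x (hF hx) i).2 hi)
    · exact hv.zero Γ i ha
  · intro Γ i hi h1 h2
    by_cases ha : S₁.aff Fs Γ
    · refine hv.const Γ i (by rwa [hA.len Γ ha]) ?_ ?_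
      · intro w hw hc
        exact h1 w hw ((hA.ps Γ ha w hw i).1 hc)
      · intro w hw hc
        exact h2 w hw ((hA.ps Γ ha w hw _).1 hc)
    · rw [hv.zero Γ _ ha, hv.zero Γ _ ha]

theorem ab_loc {G : SimpleGraph V} (S : Sch V G p Δ) (W : V → Prop) (Γ : Fin p × V) :
    ab (S.avec α) (S.bt W Γ) = match S.loc W Γ with
      | none => 0
      | some q => α q.1 q.2 := by
  unfold loc ab
  cases S.bt W Γ <;> rfl

theorem asum_agree (hA : Agr S₁ S₂ Fs) {W₁ W₂ : V → Prop} {Sg₁ Sg₂ : Fin p × V → Prop}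
    {h₁ h₂ : Edg V p → ZMod 2} (hB : AgrS S₁ S₂ Fs W₁ W₂ Sg₁ Sg₂ h₁ h₂)
    (hv : S₁.Valid F Fs α) :
    S₁.asum W₁ Sg₁ h₁ Fs (S₁.avec α) = S₂.asum W₂ Sg₂ h₂ Fs (S₂.avec α) := by
  rw [asum_eq _ _ _ _ _ _ hv.zero, asum_eq _ _ _ _ _ _ (fun Γ i h => hv.zero Γ i (by rwa [hA.aff]))]
  apply sum_congr
  · ext Γ
    simp [hA.aff]
  intro Γ hΓ
  simp only [mem_filter, mem_univ, true_and] at hΓ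
  have ha := (hA.aff Γ).2 hΓ
  congr 1
  · rw [← hA.len Γ ha]
    have := tele (S₁.lst Γ).length (α Γ)
      (fun i => S₁.pre W₁ Sg₁ h₁ Γ i + S₂.pre W₂ Sg₂ h₂ Γ i) ?_ ?_ ?_
    · rw [← sub_eq_zero, ← sum_sub_distrib, ← this]
      apply sum_congr rfl
      intro i _
      have e1 := z2 (α Γ i * S₂.pre W₂ Sg₂ h₂ Γ i)
      have e2 := z2 (α Γ i * S₂.pre W₂ Sg₂ h₂ Γ (i+1))
      linear_combination - e1 - e2
    · simp [pre_zero]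
    · rw [hB.plen Γ ha, hA.len Γ ha, z2]
    · intro i hi
      by_cases h1 : ∃ w ∈ Fs, (S₁.lst Γ)[i]? = some w
      · obtain ⟨w, hw, h1⟩ := h1
        rw [hB.p1 Γ ha w hw i h1, z2, mul_zero, mul_zero]
      · by_cases h2 : ∃ w ∈ Fs, (S₁.lst Γ)[i+1]? = some w
        · obtain ⟨w, hw, h2⟩ := h2
          rw [hB.p0 Γ ha w hw _ h2, z2, mul_zero, mul_zero]
        · push Not at h1 h2
          rw [hv.const Γ i hi h1 h2]
  · rw [ab_loc, ab_loc, hB.loc Γ ha, hB.plen Γ ha]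

end Sch
end VF

namespace VF
open Finset
open scoped Classical

theorem cover {Ω K X : Type*} [Fintype Ω] [Fintype K] [Nonempty Ω] (code : X → K)
    (good : X → Ω → Prop) (hcode : ∀ x x' ω, code x = code x' → good x ω → good x' ω)
    (Q k : ℕ) (hQ : 0 < Q) (hk : 1 ≤ k)
    (hq : ∀ x, Fintype.card Ω ≤ Q * (univ.filter (fun ω => good x ω)).card)
    (hK : Fintype.card K ≤ 2 ^ k) :
    ∃ ω : Fin (Q * k) → Ω, ∀ x, ∃ r, good x (ω r) := by
  by_contra hcon
  push Not at hcon
  set bad : K → Finset Ω := fun κ => univ.filter (fun ω => ∃ x, code x = κ ∧ ¬ good x ω) with hbad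
  set B : K → Finset (Fin (Q * k) → Ω) := fun κ => Fintype.piFinset (fun _ => bad κ) with hB
  have hN : (0:ℝ) < Fintype.card Ω := by exact_mod_cast Fintype.card_pos
  have hQ' : (0:ℝ) < Q := by exact_mod_cast hQ
  have hbc : ∀ κ, ((bad κ).card : ℝ) ≤ (1 - 1 / Q) * Fintype.card Ω := by
    intro κ
    by_cases hx : ∃ x, code x = κ
    · obtain ⟨x, hx⟩ := hx
      have h1 : bad κ ⊆ univ.filter (fun ω => ¬ good x ω) := by
        intro ω hω
        simp only [hbad, mem_filter, mem_univ, true_and] at hω ⊢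
        obtain ⟨x', h1, h2⟩ := hω
        exact fun hg => h2 (hcode x x' ω (hx.trans h1.symm) hg)
      have h2 := card_le_card h1
      have h3 := card_filter_add_card_filter_not (s := (univ : Finset Ω)) (fun ω => good x ω)
      have h4 := hq x
      rw [card_univ] at h3
      have h2' : ((bad κ).card : ℝ) ≤ ((univ.filter (fun ω => ¬ good x ω)).card : ℝ) := by
        exact_mod_cast h2
      have h3' : ((univ.filter (fun ω => good x ω)).card : ℝ) +
        ((univ.filter (fun ω => ¬ good x ω)).card : ℝ) = Fintype.card Ω := by exact_mod_cast h3
      have h4' : (Fintype.card Ω : ℝ) ≤ Q * ((univ.filter (fun ω => good x ω)).card : ℝ) := by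
        exact_mod_cast h4
      have h5 : (1 / Q : ℝ) * Fintype.card Ω ≤ ((univ.filter (fun ω => good x ω)).card : ℝ) := by
        rw [one_div, inv_mul_le_iff₀ hQ']
        exact h4'
      linarith
    · have : bad κ = ∅ := by
        rw [hbad]
        apply filter_eq_empty_iff.2
        rintro ω _ ⟨x, h, _⟩
        exact hx ⟨x, h⟩
      rw [this]
      have : (1:ℝ) / Q ≤ 1 := by
        rw [div_le_one hQ']
        exact_mod_cast hQ
      simp only [card_empty, Nat.cast_zero]
      apply mul_nonneg _ hN.le
      linarith
  have hcov : (univ : Finset (Fin (Q * k) → Ω)) ⊆ univ.biUnion B := by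
    intro ω _
    obtain ⟨x, hx⟩ := hcon ω
    rw [mem_biUnion]
    refine ⟨code x, mem_univ _, ?_⟩
    rw [hB, Fintype.mem_piFinset]
    intro r
    simp only [hbad, mem_filter, mem_univ, true_and]
    exact ⟨x, rfl, hx r⟩
  have h1 := (card_le_card hcov).trans card_biUnion_le
  have h2 : ((Fintype.card Ω : ℝ)) ^ (Q * k) ≤ ∑ κ : K, ((bad κ).card : ℝ) ^ (Q * k) := by
    have : (univ : Finset (Fin (Q * k) → Ω)).card = Fintype.card Ω ^ (Q * k) := by
      simp
    rw [this] at h1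
    have h3 : ∀ κ, (B κ).card = (bad κ).card ^ (Q * k) := by
      intro κ
      simp [hB]
    simp only [h3] at h1
    exact_mod_cast h1
  have hp1 : (0:ℝ) ≤ 1 - 1 / Q := by
    have : (1:ℝ) / Q ≤ 1 := by
      rw [div_le_one hQ']
      exact_mod_cast hQ
    linarith
  have h3 : ∑ κ : K, ((bad κ).card : ℝ) ^ (Q * k) ≤
      2 ^ k * (Real.exp (-k) * (Fintype.card Ω : ℝ) ^ (Q * k)) := by
    calc ∑ κ : K, ((bad κ).card : ℝ) ^ (Q * k)
        ≤ ∑ κ : K, (Real.exp (-k) * (Fintype.card Ω : ℝ) ^ (Q * k)) := by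
          apply sum_le_sum
          intro κ _
          calc ((bad κ).card : ℝ) ^ (Q * k) ≤ ((1 - 1 / Q) * Fintype.card Ω) ^ (Q * k) :=
                pow_le_pow_left₀ (by positivity) (hbc κ) _
            _ = (1 - 1 / Q) ^ (Q * k) * (Fintype.card Ω : ℝ) ^ (Q * k) := mul_pow _ _ _
            _ ≤ _ := by
                apply mul_le_mul_of_nonneg_right _ (by positivity)
                calc ((1:ℝ) - 1 / Q) ^ (Q * k) ≤ (Real.exp (-(1/Q))) ^ (Q * k) :=
                      pow_le_pow_left₀ hp1 (Real.one_sub_le_exp_neg _) _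
                  _ = Real.exp (-k) := by
                      rw [← Real.exp_nat_mul]
                      congr 1
                      push_cast
                      field_simp
      _ = Fintype.card K * (Real.exp (-k) * (Fintype.card Ω : ℝ) ^ (Q * k)) := by
          rw [sum_const, card_univ, nsmul_eq_mul]
      _ ≤ _ := by
          apply mul_le_mul_of_nonneg_right _ (by positivity)
          exact_mod_cast hK
  have h4 : (2:ℝ) ^ k * Real.exp (-k) < 1 := by
    rw [Real.exp_neg, ← div_eq_mul_inv, div_lt_one (Real.exp_pos _)]
    have : Real.exp k = (Real.exp 1) ^ k := by rw [← Real.exp_nat_mul, mul_one]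
    rw [this]
    exact pow_lt_pow_left₀ (by linarith [Real.exp_one_gt_d9]) (by norm_num) (by omega)
  have h5 : (0:ℝ) < (Fintype.card Ω : ℝ) ^ (Q * k) := by positivity
  nlinarith [h2.trans h3]

/-- counting colourings -/
theorem col_count {I : Type*} [Fintype I] (m : ℕ) (hm : 1 ≤ m) (A B : Finset I) (hAB : Disjoint A B)
    (hA : A.card ≤ 3) (hB : B.card ≤ m) :
    Fintype.card (I → Fin (2 * m)) ≤ 2 * (2 * m) ^ 3 *
      (univ.filter (fun c : I → Fin (2 * m) => (∀ i ∈ A, (c i).val = 0) ∧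
        (∀ i ∈ B, (c i).val ≠ 0))).card := by
  have : NeZero (2 * m) := ⟨by omega⟩
  have h1 : univ.filter (fun c : I → Fin (2 * m) => (∀ i ∈ A, (c i).val = 0) ∧
        (∀ i ∈ B, (c i).val ≠ 0)) = Fintype.piFinset (fun i : I => if i ∈ A then {(0 : Fin (2*m))}
          else if i ∈ B then univ.erase 0 else univ) := by
    ext c
    simp only [mem_filter, mem_univ, true_and, Fintype.mem_piFinset]
    constructor
    · rintro ⟨h1, h2⟩ i
      split_ifs with ha hb
      · rw [mem_singleton]
        exact Fin.ext (h1 i ha)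
      · rw [mem_erase]
        refine ⟨fun h => h2 i hb (by rw [h]; rfl), mem_univ _⟩
      · exact mem_univ _
    · intro h
      refine ⟨fun i hi => ?_, fun i hi => ?_⟩
      · have := h i
        rw [if_pos hi, mem_singleton] at this
        rw [this]; rfl
      · have := h i
        rw [if_neg (fun ha => (disjoint_left.1 hAB ha hi)), if_pos hi, mem_erase] at this
        exact fun h0 => this.1 (Fin.ext h0)
  rw [h1, Fintype.card_piFinset]
  have hpos : (0:ℝ) < 2 * m := by positivity
  have h2 : ∀ i : I, ((if i ∈ A then {(0 : Fin (2*m))}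
          else if i ∈ B then univ.erase 0 else univ : Finset (Fin (2*m))).card : ℝ) =
          (2 * m) * ((if i ∈ A then (1 / (2 * m) : ℝ) else 1) *
            (if i ∈ B then (1 - 1 / (2 * m) : ℝ) else 1)) := by
    intro i
    by_cases ha : i ∈ A
    · have hb : i ∉ B := fun hb => disjoint_left.1 hAB ha hb
      simp only [ha, hb, if_true, if_false, card_singleton]
      field_simp
      simp
    · by_cases hb : i ∈ B
      · simp only [ha, hb, if_true, if_false]
        rw [card_erase_of_mem (mem_univ _), card_univ, Fintype.card_fin,
          Nat.cast_sub (by omega)]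
        push_cast
        field_simp
      · simp only [ha, hb, if_false, card_univ, Fintype.card_fin]
        push_cast
        ring
  have h3 : (∏ i : I, ((if i ∈ A then {(0 : Fin (2*m))}
          else if i ∈ B then univ.erase 0 else univ : Finset (Fin (2*m))).card : ℝ)) =
          (2 * m) ^ (Fintype.card I) * ((1 / (2 * m)) ^ A.card * (1 - 1 / (2 * m)) ^ B.card) := by
    rw [prod_congr rfl (fun i _ => h2 i), prod_mul_distrib, prod_const, card_univ,
      prod_mul_distrib, ← prod_filter, ← prod_filter, prod_const, prod_const]
    simp
  have hmr : (1:ℝ) ≤ m := by exact_mod_cast hm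
  have hle1 : (1:ℝ) / (2 * m) ≤ 1 / 2 := by
    apply one_div_le_one_div_of_le <;> linarith
  have h4 : (1/2:ℝ) ≤ (1 - 1 / (2 * m)) ^ B.card := by
    have hb := one_add_mul_le_pow (a := -(1 / (2 * (m:ℝ)))) (by linarith) B.card
    rw [← sub_eq_add_neg] at hb
    refine le_trans ?_ hb
    have : (B.card : ℝ) ≤ m := by exact_mod_cast hB
    have : (B.card : ℝ) * (1 / (2 * m)) ≤ m * (1 / (2 * m)) := by
      apply mul_le_mul_of_nonneg_right this; positivity
    have e : (m:ℝ) * (1 / (2 * m)) = 1 / 2 := by field_simp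
    linarith
  have h5 : (1 / (2 * m) : ℝ) ^ 3 ≤ (1 / (2 * m)) ^ A.card :=
    pow_le_pow_of_le_one (by positivity) (by linarith) hA
  have h6 : (1 : ℝ) ≤ 2 * (2 * m) ^ 3 * ((1 / (2 * m)) ^ A.card * (1 - 1 / (2 * m)) ^ B.card) := by
    calc (1:ℝ) = 2 * (2 * m) ^ 3 * ((1 / (2 * m)) ^ 3 * (1 / 2)) := by
          field_simp
      _ ≤ _ := by gcongr
  have : ((Fintype.card (I → Fin (2 * m)) : ℕ) : ℝ) ≤ 2 * (2 * m) ^ 3 *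
      (∏ i : I, ((if i ∈ A then {(0 : Fin (2*m))}
          else if i ∈ B then univ.erase 0 else univ : Finset (Fin (2*m))).card : ℝ)) := by
    rw [h3]
    simp only [Fintype.card_fun, Fintype.card_fin]
    push_cast
    have hp : (0:ℝ) < (2 * m) ^ Fintype.card I := by positivity
    nlinarith
  exact_mod_cast this

theorem prod_count {Ω₁ Ω₂ : Type*} [Fintype Ω₁] [Fintype Ω₂] (P : Ω₁ → Prop) (R : Ω₁ → Ω₂ → Prop)
    (q : ℕ) (h1 : Fintype.card Ω₁ ≤ q * (univ.filter P).card)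
    (h2 : ∀ c, P c → Fintype.card Ω₂ ≤ 2 * (univ.filter (R c)).card) :
    Fintype.card (Ω₁ × Ω₂) ≤ (2 * q) * (univ.filter (fun o : Ω₁ × Ω₂ => P o.1 ∧ R o.1 o.2)).card := by
  have h3 : (univ.filter (fun o : Ω₁ × Ω₂ => P o.1 ∧ R o.1 o.2)) =
      ((univ.filter P).sigma (fun c => univ.filter (R c))).map
        (Equiv.sigmaEquivProd Ω₁ Ω₂).toEmbedding := by
    ext ⟨a, b⟩
    simp
  rw [h3, card_map, card_sigma, Fintype.card_prod]
  have h4 : (univ.filter P).card * Fintype.card Ω₂ ≤ 2 * ∑ c ∈ univ.filter P, (univ.filter (R c)).card := by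
    rw [mul_sum, ← smul_eq_mul]
    apply card_nsmul_le_sum
    intro c hc
    exact h2 c (by simpa using hc)
  calc _ ≤ (q * (univ.filter P).card) * Fintype.card Ω₂ := Nat.mul_le_mul_right _ h1
    _ = q * ((univ.filter P).card * Fintype.card Ω₂) := by ring
    _ ≤ q * (2 * ∑ c ∈ univ.filter P, (univ.filter (R c)).card) := Nat.mul_le_mul_left _ h4
    _ = _ := by ring

theorem half_count {E : Type*} [Fintype E] (φ : (E → ZMod 2) → ZMod 2) (e : E → ZMod 2)
    (h : ∀ x, φ (x + e) = φ x + 1) :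
    Fintype.card (E → ZMod 2) ≤ 2 * (univ.filter (fun x => φ x ≠ 0)).card := by
  have h1 := card_filter_add_card_filter_not (s := (univ : Finset (E → ZMod 2))) (fun x => φ x ≠ 0)
  rw [card_univ] at h1
  have h2 : (univ.filter (fun x => ¬ φ x ≠ 0)).card ≤ (univ.filter (fun x => φ x ≠ 0)).card := by
    apply card_le_card_of_injOn (fun x => x + e)
    · intro x hx
      simp only [coe_filter, mem_univ, true_and, Set.mem_ofPred_eq, not_not] at hx ⊢
      rw [h, hx]
      decide
    · intro x _ y _ hxy
      exact add_right_cancel hxy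
  omega

end VF

namespace VF
open Finset
open scoped Classical

/-- card at most 2^b -/
def Bt (α : Type) [Fintype α] (b : ℕ) : Prop := Fintype.card α ≤ 2 ^ b

theorem Bt.prod {α β : Type} [Fintype α] [Fintype β] {a b : ℕ} (h1 : Bt α a) (h2 : Bt β b) :
    Bt (α × β) (a + b) := by
  unfold Bt at *
  rw [Fintype.card_prod, pow_add]
  exact Nat.mul_le_mul h1 h2

theorem Bt.pi {α : Type} [Fintype α] {a : ℕ} (k : ℕ) (h1 : Bt α a) :
    Bt (Fin k → α) (k * a) := by
  unfold Bt at *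
  rw [Fintype.card_fun, Fintype.card_fin, mul_comm, pow_mul]
  exact Nat.pow_le_pow_left h1 _

theorem Bt.opt {α : Type} [Fintype α] {a : ℕ} (h1 : Bt α a) : Bt (Option α) (a + 1) := by
  unfold Bt at *
  rw [Fintype.card_option, pow_succ]
  have := Nat.one_le_two_pow (n := a)
  omega

theorem Bt.bool : Bt Bool 1 := by simp [Bt]
theorem Bt.z2 : Bt (ZMod 2) 1 := by simp [Bt, ZMod.card]
theorem Bt.mono {α : Type} [Fintype α] {a b : ℕ} (h1 : Bt α a) (h : a ≤ b) : Bt α b :=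
  le_trans h1 (Nat.pow_le_pow_right (by norm_num) h)

noncomputable def en {α : Type} (Δ : ℕ) (s : Finset α) : Fin Δ → Option α :=
  fun i => s.toList[i.val]?

theorem en_mem {α : Type} {Δ : ℕ} {s : Finset α} (h : s.card ≤ Δ) (x : α) :
    x ∈ s ↔ ∃ i, en Δ s i = some x := by
  rw [← mem_toList, List.mem_iff_getElem?]
  constructor
  · rintro ⟨i, hi⟩
    have : i < s.toList.length := by
      by_contra hc
      rw [List.getElem?_eq_none (by omega)] at hi
      simp at hi
    rw [length_toList] at this
    exact ⟨⟨i, by omega⟩, hi⟩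
  · rintro ⟨i, hi⟩
    exact ⟨i, hi⟩

noncomputable def posSet {V : Type} (l : List V) (w : V) : Finset ℕ :=
  (range l.length).filter (fun i => l[i]? = some w)

theorem mem_posSet {V : Type} (l : List V) (w : V) (i : ℕ) :
    i ∈ posSet l w ↔ l[i]? = some w := by
  unfold posSet
  rw [mem_filter, mem_range, and_iff_right_iff_imp]
  intro hi
  by_contra hc
  rw [List.getElem?_eq_none (by omega)] at hi
  simp at hi

theorem card_posSet {V : Type} (l : List V) (w : V) : (posSet l w).card ≤ l.count w := by
  induction l using List.reverseRecOn with
  | nil => simp [posSet]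
  | append_singleton l x ih =>
    have : posSet (l ++ [x]) w ⊆ posSet l w ∪ (if x = w then {l.length} else ∅) := by
      intro i hi
      rw [mem_posSet] at hi
      rw [mem_union, mem_posSet]
      by_cases h : i < l.length
      · left
        rwa [List.getElem?_append_left h] at hi
      · right
        rw [List.getElem?_append_right (by omega)] at hi
        have h0 : i - l.length = 0 := by
          by_contra h0
          rw [List.getElem?_eq_none (by simp; omega)] at hi
          simp at hi
        rw [h0] at hi
        simp only [List.getElem?_cons_zero, Option.some.injEq] at hi
        rw [if_pos hi, mem_singleton]
        omega
    refine (card_le_card this).trans ((card_union_le _ _).trans ?_)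
    rw [List.count_append]
    apply Nat.add_le_add ih
    split_ifs with hx
    · simp [hx]
    · simp

namespace Sch

abbrev Om (V : Type) (p M : ℕ) := ((V ⊕ (Fin p × V)) → Fin M) × (Edg V p → ZMod 2)

def oW {V : Type} {p M : ℕ} (o : Om V p M) (x : V) : Prop := (o.1 (Sum.inl x)).val = 0
def oS {V : Type} {p M : ℕ} (o : Om V p M) (x : Fin p × V) : Prop := (o.1 (Sum.inr x)).val = 0

variable {V : Type} [Fintype V] {G : SimpleGraph V} {p Δ : ℕ}

theorem affine_card (S : Sch V G p Δ) (Fs : Finset V) :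
    (univ.filter (fun Γ => S.aff Fs Γ)).card ≤ Fs.card * p := by
  have : univ.filter (fun Γ => S.aff Fs Γ) ⊆
      (Fs ×ˢ (univ : Finset (Fin p))).image (fun q => (q.2, S.cid q.2 q.1)) := by
    intro Γ hΓ
    simp only [mem_filter, mem_univ, true_and] at hΓ
    obtain ⟨w, hw, h1⟩ := hΓ
    rw [mem_image]
    exact ⟨(w, Γ.1), by simp [hw], by simp only [h1.2]⟩
  refine (card_le_card this).trans (card_image_le.trans ?_)
  rw [card_product, card_univ, Fintype.card_fin]

structure Inst (S : Sch V G p Δ) (f : ℕ) where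
  φ : Fin (f+2) → V
  mask : Fin (f+2) → Bool
  α : Fin p × V → ℕ → ZMod 2
  e : Edg V p
  val : S.Valid ((univ.filter (fun i => mask i = true)).image φ) (univ.image φ) α
  se : S.sedge e
  un : ∀ Γ, e.2.2 = some Γ → ¬ S.aff (univ.image φ) Γ
  a1 : S.avec α e.1 = 1
  n1 : e.1 ∉ (univ.filter (fun i => mask i = true)).image φ
  n2 : e.2.1 ∉ (univ.filter (fun i => mask i = true)).image φ
  af : S.aff (univ.image φ) (S.gam e.2.1)
  a2 : S.avec α e.2.1 = 0

def good (S : Sch V G p Δ) {M : ℕ} (F Fs : Finset V) (a : V → ZMod 2) (o : Om V p M) : Prop :=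
  (∀ w ∈ F, ¬ oW o w) ∧ (∀ Γ, S.aff Fs Γ → ¬ oS o Γ) ∧ S.asum (oW o) (oS o) o.2 Fs a ≠ 0

abbrev Code (V : Type) (p Δ f : ℕ) := (Fin (f+2) → V) × (Fin (f+2) → Bool) ×
  (Fin (f+2) → Fin p → ZMod 2 × (Fin Δ → ZMod 2 × ZMod 2))

noncomputable def acode (S : Sch V G p Δ) (α : Fin p × V → ℕ → ZMod 2) (w : V) (j : Fin p) :
    ZMod 2 × (Fin Δ → ZMod 2 × ZMod 2) :=
  (α (j, S.cid j w) 0, fun k => match en Δ (posSet (S.lst (j, S.cid j w)) w) k with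
    | none => (0, 0)
    | some q => (α (j, S.cid j w) q, α (j, S.cid j w) (q+1)))

theorem acode_inj (S : Sch V G p Δ) {F Fs : Finset V} {α β : Fin p × V → ℕ → ZMod 2}
    (hα : S.Valid F Fs α) (hβ : S.Valid F Fs β)
    (h : ∀ w ∈ Fs, ∀ j, S.acode α w j = S.acode β w j) : S.avec α = S.avec β := by
  have key0 : ∀ Γ, S.aff Fs Γ → α Γ 0 = β Γ 0 := by
    rintro ⟨j, c⟩ ⟨w, hw, hm⟩
    have := congrArg Prod.fst (h w hw j)
    simp only [acode] at this
    have e : S.cid j w = c := hm.2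
    rwa [e] at this
  have key1 : ∀ Γ w i, w ∈ Fs → (S.lst Γ)[i]? = some w → α Γ i = β Γ i ∧ α Γ (i+1) = β Γ (i+1) := by
    rintro ⟨j, c⟩ w i hw hi
    have hm := S.lst_mem (j, c) w (List.mem_of_getElem? hi)
    have e : S.cid j w = c := hm.2
    have h2 := congrArg Prod.snd (h w hw j)
    simp only [acode, e] at h2
    rw [← mem_posSet] at hi
    obtain ⟨k, hk⟩ := (en_mem ((card_posSet _ _).trans (S.count (j, c) w)) i).1 hi
    have h3 := congrFun h2 k
    simp only [hk] at h3
    exact ⟨congrArg Prod.fst h3, congrArg Prod.snd h3⟩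
  have key : ∀ Γ, S.aff Fs Γ → ∀ i, i < (S.lst Γ).length → α Γ i = β Γ i := by
    intro Γ hΓ i
    induction i with
    | zero => intro _; exact key0 Γ hΓ
    | succ i ih =>
      intro hi
      by_cases h1 : ∃ w ∈ Fs, (S.lst Γ)[i]? = some w
      · obtain ⟨w, hw, h1⟩ := h1
        exact (key1 Γ w i hw h1).2
      · by_cases h2 : ∃ w ∈ Fs, (S.lst Γ)[i+1]? = some w
        · obtain ⟨w, hw, h2⟩ := h2
          exact (key1 Γ w _ hw h2).1
        · push Not at h1 h2
          rw [← hα.const Γ i hi h1 h2, ← hβ.const Γ i hi h1 h2, ih (by omega)]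
  funext y
  unfold avec
  by_cases hy : S.aff Fs (S.gam y)
  · exact key _ hy _ (S.pos_lt y)
  · rw [hα.zero _ _ hy, hβ.zero _ _ hy]

theorem code_bits (f : ℕ) (hn : Fintype.card V ≤ 2 ^ p) :
    Bt (Code V p Δ f) ((f+2) * p + ((f+2) * 1 + (f+2) * (p * (1 + Δ * (1 + 1))))) :=
  (Bt.pi _ hn).prod ((Bt.pi _ Bt.bool).prod (Bt.pi _ (Bt.pi _ (Bt.z2.prod (Bt.pi _
    (Bt.z2.prod Bt.z2))))))

set_option maxHeartbeats 2000000 in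
theorem good_count (S : Sch V G p Δ) {f m : ℕ} (hm : (f+2) * (p+1) ≤ m) (x : Inst S f) :
    Fintype.card (Om V p (2*m)) ≤ (2 * (2 * (2 * m) ^ 3)) * (univ.filter (fun o : Om V p (2*m) =>
      S.good ((univ.filter (fun i => x.mask i = true)).image x.φ) (univ.image x.φ)
        (S.avec x.α) o)).card := by
  set F := (univ.filter (fun i => x.mask i = true)).image x.φ with hF
  set Fs := univ.image x.φ with hFs
  have hFF : F ⊆ Fs := image_subset_image (filter_subset _ _)
  have hFc : Fs.card ≤ f + 2 := card_image_le.trans (by simp)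
  set A : Finset (V ⊕ (Fin p × V)) := {Sum.inl x.e.1, Sum.inl x.e.2.1} ∪
    (match x.e.2.2 with | none => ∅ | some Γ => {Sum.inr Γ}) with hA
  set B : Finset (V ⊕ (Fin p × V)) := F.disjSum (univ.filter (fun Γ => S.aff Fs Γ)) with hB
  have hAc : A.card ≤ 3 := by
    refine (card_union_le _ _).trans ?_
    have h1 : ({Sum.inl x.e.1, Sum.inl x.e.2.1} : Finset (V ⊕ (Fin p × V))).card ≤ 2 := card_le_two
    have h2 : ((match x.e.2.2 with | none => ∅ | some Γ => {Sum.inr Γ} :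
      Finset (V ⊕ (Fin p × V)))).card ≤ 1 := by
      cases x.e.2.2 <;> simp
    omega
  have hBc : B.card ≤ m := by
    rw [hB, card_disjSum]
    have h1 := card_le_card hFF
    have h2 := S.affine_card Fs
    have h3 := Nat.mul_le_mul_right p hFc
    nlinarith
  have hAB : Disjoint A B := by
    rw [disjoint_left]
    intro i hi hb
    rw [hA, mem_union] at hi
    rcases hi with hi | hi
    · simp only [mem_insert, mem_singleton] at hi
      rcases hi with rfl | rfl
      · rw [hB, inl_mem_disjSum] at hb
        exact x.n1 hb
      · rw [hB, inl_mem_disjSum] at hb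
        exact x.n2 hb
    · cases he : x.e.2.2 with
      | none => simp [he] at hi
      | some Γ =>
        simp only [he, mem_singleton] at hi
        rw [hi, hB, inr_mem_disjSum, mem_filter] at hb
        exact x.un Γ he hb.2
  have hm1 : 1 ≤ m := by nlinarith
  obtain ⟨P, hP⟩ : ∃ P : ((V ⊕ (Fin p × V)) → Fin (2 * m)) → Prop,
      ∀ c, P c ↔ ((∀ i ∈ A, (c i).val = 0) ∧ (∀ i ∈ B, (c i).val ≠ 0)) := ⟨_, fun _ => Iff.rfl⟩
  have h1 : Fintype.card ((V ⊕ (Fin p × V)) → Fin (2 * m)) ≤ 2 * (2 * m) ^ 3 *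
      (univ.filter P).card := by
    have h := col_count m hm1 A B hAB hAc hBc
    simp only [← hP] at h
    convert h
  obtain ⟨Q, hQ⟩ : ∃ Q : ((V ⊕ (Fin p × V)) → Fin (2 * m)) → (Edg V p → ZMod 2) → Prop,
      ∀ c h, Q c h ↔ S.asum (oW (c, h)) (oS (c, h)) h Fs (S.avec x.α) ≠ 0 :=
    ⟨_, fun _ _ => Iff.rfl⟩
  have h3 : ∀ c, P c → Fintype.card (Edg V p → ZMod 2) ≤ 2 * (univ.filter (Q c)).card := by
    intro c hc
    rw [hP] at hc
    have hh := half_count (fun h => S.asum (oW (c, h)) (oS (c, h)) h Fs (S.avec x.α))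
      (Pi.single x.e 1) ?_
    · simp only [← hQ] at hh
      convert hh
    intro h
    apply S.detect
    · refine ⟨hc.1 _ ?_, hc.1 _ ?_, x.se, ?_⟩
      · simp [hA]
      · simp [hA]
      · intro Γ hΓ
        apply hc.1
        simp [hA, hΓ]
    · by_contra hc
      have := x.a1
      rw [avec, x.val.zero _ _ hc] at this
      simp at this
    · exact x.af
    · exact x.a1
    · exact x.a2
  have h2 := prod_count P Q _ h1 h3
  refine h2.trans (Nat.mul_le_mul_left _ (card_le_card ?_))
  intro o ho
  simp only [mem_filter, mem_univ, true_and] at ho ⊢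
  obtain ⟨h5, h4⟩ := ho
  have h3 := ((hP _).1 h5).2
  rw [hQ] at h4
  refine ⟨fun w hw => h3 _ (by rw [hB, inl_mem_disjSum]; exact hw), fun Γ hΓ => h3 _ ?_, h4⟩
  rw [hB, inr_mem_disjSum, mem_filter]
  exact ⟨mem_univ _, hΓ⟩

theorem seeds (S : Sch V G p Δ) (f m k : ℕ) (hn : Fintype.card V ≤ 2 ^ p)
    (hm : (f+2) * (p+1) ≤ m) (hk : (f+2) * p + ((f+2) * 1 + (f+2) * (p * (1 + Δ * (1 + 1)))) ≤ k) :
    ∃ ω : Fin ((2 * (2 * (2 * m) ^ 3)) * k) → Om V p (2 * m), ∀ x : Inst S f, ∃ r,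
      S.good ((univ.filter (fun i => x.mask i = true)).image x.φ) (univ.image x.φ)
        (S.avec x.α) (ω r) := by
  have hm1 : 1 ≤ m := by nlinarith
  have : NeZero (2 * m) := ⟨by omega⟩
  have hk1 : 1 ≤ k := by nlinarith [Nat.zero_le ((f+2) * p), Nat.zero_le ((f+2) * (p * (1 + Δ * (1 + 1))))]
  apply cover (K := Code V p Δ f) (fun x : Inst S f => (x.φ, x.mask, fun i j => S.acode x.α (x.φ i) j))
    (fun x o => S.good ((univ.filter (fun i => x.mask i = true)).image x.φ) (univ.image x.φ)
        (S.avec x.α) o)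
  · intro x y o hxy hg
    simp only [Prod.mk.injEq] at hxy
    obtain ⟨h1, h2, h3⟩ := hxy
    have hv := y.val
    rw [← h1, ← h2] at hv
    have : S.avec x.α = S.avec y.α := by
      apply S.acode_inj x.val hv
      intro w hw j
      rw [mem_image] at hw
      obtain ⟨i, _, rfl⟩ := hw
      have := congrFun (congrFun h3 i) j
      rwa [← h1] at this
    rw [← h1, ← h2, ← this]
    exact hg
  · positivity
  · exact hk1
  · exact fun x => S.good_count hm x
  · exact (code_bits f hn).mono hk

end Sch
end VF

namespace VF
open Finset
open scoped Classical

theorem exists_phi {V : Type} (f : ℕ) (F : Finset V) (hF : F.card ≤ f) (s t : V) :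
    ∃ (φ : Fin (f+2) → V) (mask : Fin (f+2) → Bool),
      univ.image φ = insert s (insert t F) ∧
      (univ.filter (fun i => mask i = true)).image φ = F := by
  refine ⟨fun i => if i.val = 0 then s else if i.val = 1 then t else (F.toList[i.val-2]?).getD s,
    fun i => decide (2 ≤ i.val ∧ i.val - 2 < F.card), ?_, ?_⟩
  · ext x
    simp only [mem_image, mem_univ, true_and, mem_insert]
    constructor
    · rintro ⟨i, rfl⟩
      split_ifs with h0 h1
      · left; rfl
      · right; left; rfl
      · by_cases hi : i.val - 2 < F.toList.length
        · rw [List.getElem?_eq_getElem hi]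
          right; right
          rw [Option.getD_some, ← mem_toList]
          exact List.getElem_mem _
        · rw [List.getElem?_eq_none (by omega)]
          left; rfl
    · rintro (rfl | rfl | hx)
      · exact ⟨⟨0, by omega⟩, by simp⟩
      · exact ⟨⟨1, by omega⟩, by simp⟩
      · rw [← mem_toList, List.mem_iff_getElem] at hx
        obtain ⟨i, hi, hx⟩ := hx
        have hi' := hi
        rw [length_toList] at hi'
        refine ⟨⟨i+2, by omega⟩, ?_⟩
        simp [List.getElem?_eq_getElem hi, hx]
  · ext x
    simp only [mem_image, mem_filter, mem_univ, true_and, decide_eq_true_eq]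
    constructor
    · rintro ⟨i, ⟨h1, h2⟩, rfl⟩
      rw [if_neg (by omega), if_neg (by omega),
        List.getElem?_eq_getElem (by rw [length_toList]; exact h2), Option.getD_some, ← mem_toList]
      exact List.getElem_mem _
    · intro hx
      rw [← mem_toList, List.mem_iff_getElem] at hx
      obtain ⟨i, hi, hx⟩ := hx
      have hi' := hi
      rw [length_toList] at hi'
      refine ⟨⟨i+2, by omega⟩, ⟨by simp, by simpa using hi'⟩, ?_⟩
      simp [List.getElem?_eq_getElem hi, hx]

theorem rs_reach {V : Type} (G : SimpleGraph V) (F : Finset V) (s t : V)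
    (hs : s ∈ ((↑F : Set V)ᶜ)) (ht : t ∈ ((↑F : Set V)ᶜ)) :
    (rs G F).Reachable s t ↔ (G.induce ((↑F : Set V)ᶜ)).Reachable ⟨s, hs⟩ ⟨t, ht⟩ := by
  constructor
  · rintro ⟨w⟩
    induction w with
    | nil => exact SimpleGraph.Reachable.refl _
    | cons h _ ih =>
      refine SimpleGraph.Reachable.trans ?_ (ih (by simpa using h.2.2) ht)
      apply SimpleGraph.Adj.reachable
      exact h.1
  · intro h
    let g : G.induce ((↑F : Set V)ᶜ) →g rs G F :=
      ⟨fun x => x.1, fun {a b} hab => ⟨hab, fun h => a.2 h, fun h => b.2 h⟩⟩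
    exact h.map g

namespace Sch
variable {V : Type} [Fintype V] {p Δ : ℕ}

noncomputable def alf {G : SimpleGraph V} (S : Sch V G p Δ) (Fs A : Finset V)
    (Γ : Fin p × V) (i : ℕ) : ZMod 2 :=
  ind (S.aff Fs Γ ∧ ∃ x ∈ A, (S.lst Γ)[i]? = some x)

theorem alf_avec {G : SimpleGraph V} (S : Sch V G p Δ) (Fs A : Finset V) (y : V) :
    S.avec (S.alf Fs A) y = ind (S.aff Fs (S.gam y) ∧ y ∈ A) := by
  unfold avec alf
  rw [get_pos]
  congr 1
  apply propext
  simp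

theorem alf_valid {G : SimpleGraph V} (S : Sch V G p Δ) (F Fs A : Finset V) (hF : F ⊆ Fs)
    (hAF : ∀ x ∈ A, x ∉ F)
    (hA : ∀ x y, G.Adj x y → x ∉ F → y ∉ F → x ∈ A → y ∈ A) : S.Valid F Fs (S.alf Fs A) := by
  refine ⟨?_, ?_, ?_⟩
  · intro Γ i h
    simp [alf, ind, h]
  · intro Γ i x hx hi
    unfold alf ind
    rw [if_neg]
    rintro ⟨_, y, hy, hi'⟩
    rw [hi] at hi'
    cases hi'
    exact hAF _ hy hx
  · intro Γ i hi h1 h2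
    unfold alf
    rw [List.getElem?_eq_getElem (by omega)] at h1 ⊢
    rw [List.getElem?_eq_getElem hi] at h2 ⊢
    have hadj := List.isChain_iff_getElem.1 (S.chain Γ) i hi
    have n1 : (S.lst Γ)[i] ∉ F := fun h => h1 _ (hF h) rfl
    have n2 : (S.lst Γ)[i+1] ∉ F := fun h => h2 _ (hF h) rfl
    congr 1
    apply propext
    simp only [Option.some.injEq, exists_eq_right']
    constructor
    · rintro ⟨h, h'⟩
      exact ⟨h, hA _ _ hadj n1 n2 h'⟩
    · rintro ⟨h, h'⟩
      exact ⟨h, hA _ _ hadj.symm n2 n1 h'⟩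

theorem core {G₁ G₂ : SimpleGraph V} {S₁ : Sch V G₁ p Δ} {S₂ : Sch V G₂ p Δ} {R M f : ℕ}
    (ω₁ ω₂ : Fin R → Om V p M) (s t : V) (F : Finset V) (hs : s ∉ F) (ht : t ∉ F)
    (hf : F.card ≤ f)
    (hω : ∀ x : Inst S₂ f, ∃ r,
      S₂.good ((univ.filter (fun i => x.mask i = true)).image x.φ) (univ.image x.φ)
        (S₂.avec x.α) (ω₂ r))
    (hA : Agr S₁ S₂ (insert s (insert t F)))
    (hB : ∀ r, AgrS S₁ S₂ (insert s (insert t F)) (oW (ω₁ r)) (oW (ω₂ r))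
      (oS (ω₁ r)) (oS (ω₂ r)) (ω₁ r).2 (ω₂ r).2)
    (hr : (rs G₂ F).Reachable s t) : (rs G₁ F).Reachable s t := by
  by_contra hn
  set Fs := insert s (insert t F) with hFs
  have hFF : F ⊆ Fs := by
    intro x hx
    simp [hFs, hx]
  set A : Finset V := univ.filter (fun x => x ∉ F ∧ (rs G₁ F).Reachable s x) with hAd
  have hAF : ∀ x ∈ A, x ∉ F := fun x hx => (mem_filter.1 hx).2.1
  have hAc : ∀ x y, G₁.Adj x y → x ∉ F → y ∉ F → x ∈ A → y ∈ A := by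
    intro x y hxy hx hy hxA
    rw [hAd, mem_filter] at hxA ⊢
    refine ⟨mem_univ _, hy, hxA.2.2.trans (SimpleGraph.Adj.reachable ?_)⟩
    exact ⟨hxy, hx, hy⟩
  have hv1 := S₁.alf_valid F Fs A hFF hAF hAc
  set α := S₁.alf Fs A with hα
  have hv2 := hv1.transfer hA hFF
  have hsF : s ∈ Fs := by simp [hFs]
  have htF : t ∈ Fs := by simp [hFs]
  have e1 : ∀ w ∈ Fs, S₂.avec α w = S₁.avec α w := by
    intro w hw
    rw [avec, avec, hA.gam w hw, hA.pos w hw]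
  have as : S₂.avec α s = 1 := by
    rw [e1 s hsF, hα, alf_avec, ind, if_pos]
    exact ⟨⟨s, hsF, S₁.mem_gam s⟩, by simp [hAd, hs]⟩
  have at' : S₂.avec α t ≠ 1 := by
    rw [e1 t htF, hα, alf_avec, ind, if_neg]
    · simp
    · rintro ⟨_, h⟩
      rw [hAd, mem_filter] at h
      exact hn h.2.2
  apply at'
  refine S₂.closure_prop F Fs (S₂.avec α) ?_ ?_ s t as hs ⟨t, htF, S₂.mem_gam t⟩ ?_ hr
  · intro x hx
    by_contra hc
    rw [avec, hv2.zero _ _ hc] at hx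
    simp at hx
  · intro e he hΓ ha1 hn1 hn2 haf
    by_contra ha2
    have ha2' : S₂.avec α e.2.1 = 0 := by
      revert ha2
      generalize S₂.avec α e.2.1 = z
      revert z
      decide
    obtain ⟨φ, mask, hφ, hmask⟩ := exists_phi f F hf s t
    rw [← hFs] at hφ
    obtain ⟨r, hg⟩ := hω ⟨φ, mask, α, e, by rw [hφ, hmask]; exact hv2, he, by rw [hφ]; exact hΓ,
      ha1, by rw [hmask]; exact hn1, by rw [hmask]; exact hn2, by rw [hφ]; exact haf, ha2'⟩
    simp only [hφ, hmask] at hg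
    obtain ⟨g1, g2, g3⟩ := hg
    apply g3
    rw [← asum_agree hA (hB r) hv1]
    apply S₁.valid _ _ _ F Fs hFF A hAF hAc
    · exact S₁.alf_avec Fs A
    · intro x hx
      rw [(hB r).W x (hFF hx)]
      exact g1 x hx
    · intro Γ h
      rw [(hB r).Sg Γ h]
      exact g2 Γ ((hA.aff Γ).1 h)
  · intro x hx hxF
    rw [avec, hv2.fz _ _ x hxF (S₂.get_pos x)] at hx
    simp at hx

end Sch
end VF

namespace VF
open Finset
open scoped Classical

theorem ofNat_inj {N i j : ℕ} [NeZero N] (hi : i < N) (hj : j < N)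
    (h : Fin.ofNat N i = Fin.ofNat N j) : i = j := by
  have := congrArg Fin.val h
  simpa [Fin.val_ofNat, Nat.mod_eq_of_lt hi, Nat.mod_eq_of_lt hj] using this

namespace Sch
variable {V : Type} [Fintype V] {p Δ R M : ℕ}

abbrev LJ (V : Type) (p Δ q R : ℕ) := Fin (2^q) × (Fin R → ZMod 2) ×
  (Fin R → Option ((Fin p × V) × Fin (2^q))) × (Fin R → Bool) ×
  (Fin Δ → Option (Fin (2^q) × (Fin R → ZMod 2) × (Fin R → ZMod 2)))

abbrev Lab (V : Type) (p Δ q R : ℕ) := V × Fin p × Fin (2^q) × (Fin R → Bool) ×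
  (Fin p → V × LJ V p Δ q R)

noncomputable def labJ {G : SimpleGraph V} (S : Sch V G p Δ) (ω : Fin R → Om V p M) (q : ℕ)
    (w : V) (Γ : Fin p × V) : LJ V p Δ q R :=
  (Fin.ofNat _ (S.lst Γ).length,
   fun r => S.pre (oW (ω r)) (oS (ω r)) (ω r).2 Γ (S.lst Γ).length,
   fun r => (S.loc (oW (ω r)) Γ).map (fun c => (c.1, Fin.ofNat _ c.2)),
   fun r => decide (oS (ω r) Γ),
   fun k => (en Δ (posSet (S.lst Γ) w) k).map (fun i => (Fin.ofNat _ i,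
      fun r => S.pre (oW (ω r)) (oS (ω r)) (ω r).2 Γ i,
      fun r => S.pre (oW (ω r)) (oS (ω r)) (ω r).2 Γ (i+1))))

noncomputable def lab {G : SimpleGraph V} (S : Sch V G p Δ) (ω : Fin R → Om V p M) (q : ℕ)
    (w : V) : Lab V p Δ q R :=
  (w, S.lv w, Fin.ofNat _ (S.pos w), fun r => decide (oW (ω r) w),
    fun j => (S.cid j w, S.labJ ω q w (j, S.cid j w)))

set_option synthInstance.maxSize 1000 in
set_option synthInstance.maxHeartbeats 200000 in
theorem lab_bits (q : ℕ) (hn : Fintype.card V ≤ 2 ^ p) : Bt (Lab V p Δ q R)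
    (p + (p + (q + (R * 1 + p * (p + (q + (R * 1 + (R * (((p + p) + q) + 1) +
      (R * 1 + Δ * ((q + (R * 1 + R * 1)) + 1)))))))))) := by
  have hp : Bt (Fin p) p := by
    unfold Bt
    rw [Fintype.card_fin]
    exact Nat.lt_two_pow_self.le
  have hq : Bt (Fin (2^q)) q := by
    unfold Bt
    rw [Fintype.card_fin]
  have hV : Bt V p := hn
  exact hV.prod (hp.prod (hq.prod ((Bt.pi _ Bt.bool).prod (Bt.pi _ (hV.prod (hq.prod
    ((Bt.pi _ Bt.z2).prod ((Bt.pi _ (((hp.prod hV).prod hq).opt)).prod ((Bt.pi _ Bt.bool).prod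
      (Bt.pi _ (hq.prod ((Bt.pi _ Bt.z2).prod (Bt.pi _ Bt.z2))).opt))))))))))

theorem lst_len {G : SimpleGraph V} (S : Sch V G p Δ) (Γ : Fin p × V) :
    (S.lst Γ).length ≤ Fintype.card V * Δ := by
  rw [← List.sum_toFinset_count_eq_length]
  calc _ ≤ ∑ x ∈ (S.lst Γ).toFinset, Δ := sum_le_sum (fun x _ => S.count Γ x)
    _ ≤ _ := by
      rw [sum_const, smul_eq_mul]
      exact Nat.mul_le_mul_right _ (card_le_univ _)

section
variable {G₁ G₂ : SimpleGraph V} {S₁ : Sch V G₁ p Δ} {S₂ : Sch V G₂ p Δ}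
  {ω₁ ω₂ : Fin R → Om V p M} {q : ℕ}

theorem labJ_pos (hq : Fintype.card V * Δ < 2 ^ q) {w : V} {Γ : Fin p × V}
    (h : S₁.labJ ω₁ q w Γ = S₂.labJ ω₂ q w Γ) {i : ℕ} (hi : (S₁.lst Γ)[i]? = some w) :
    (S₂.lst Γ)[i]? = some w ∧
    (∀ r, S₁.pre (oW (ω₁ r)) (oS (ω₁ r)) (ω₁ r).2 Γ i = S₂.pre (oW (ω₂ r)) (oS (ω₂ r)) (ω₂ r).2 Γ i) ∧
    (∀ r, S₁.pre (oW (ω₁ r)) (oS (ω₁ r)) (ω₁ r).2 Γ (i+1) =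
      S₂.pre (oW (ω₂ r)) (oS (ω₂ r)) (ω₂ r).2 Γ (i+1)) := by
  have l1 : i < 2 ^ q := by
    obtain ⟨h', _⟩ := List.getElem?_eq_some_iff.1 hi
    exact h'.trans_le ((S₁.lst_len Γ).trans hq.le)
  rw [← mem_posSet] at hi
  obtain ⟨k, hk⟩ := (en_mem ((card_posSet _ _).trans (S₁.count Γ w)) i).1 hi
  simp only [labJ, Prod.mk.injEq] at h
  have h5 := congrFun h.2.2.2.2 k
  simp only [hk, Option.map_some] at h5
  obtain ⟨i', hi', h6⟩ := Option.map_eq_some_iff.1 h5.symm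
  have h7 := (en_mem ((card_posSet _ _).trans (S₂.count Γ w)) i').2 ⟨k, hi'⟩
  rw [mem_posSet] at h7
  have l2 : i' < 2 ^ q := by
    obtain ⟨h', _⟩ := List.getElem?_eq_some_iff.1 h7
    exact h'.trans_le ((S₂.lst_len Γ).trans hq.le)
  simp only [Prod.mk.injEq] at h6
  have : i' = i := ofNat_inj l2 l1 h6.1
  subst this
  exact ⟨h7, fun r => (congrFun h6.2.1 r).symm, fun r => (congrFun h6.2.2 r).symm⟩

theorem labJ_of_lab {w : V} (h : S₁.lab ω₁ q w = S₂.lab ω₂ q w) {Γ : Fin p × V}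
    (hm : S₁.mem Γ w) : S₁.labJ ω₁ q w Γ = S₂.labJ ω₂ q w Γ ∧ S₂.mem Γ w := by
  simp only [lab, Prod.mk.injEq] at h
  obtain ⟨_, h1, _, _, h2⟩ := h
  have h3 := congrFun h2 Γ.1
  simp only [Prod.mk.injEq] at h3
  obtain ⟨h4, h5⟩ := h3
  obtain ⟨m1, m2⟩ := hm
  refine ⟨?_, by rwa [← h1], by rwa [← h4]⟩
  rw [← h4, m2] at h5
  exact h5

theorem agree (hq : Fintype.card V * Δ < 2 ^ q) {Fs : Finset V}
    (h : ∀ w ∈ Fs, S₁.lab ω₁ q w = S₂.lab ω₂ q w) : Agr S₁ S₂ Fs := by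
  have hl : ∀ {G : SimpleGraph V} (S : Sch V G p Δ) Γ, (S.lst Γ).length < 2 ^ q :=
    fun S Γ => (S.lst_len Γ).trans_lt hq
  have hlp : ∀ {G : SimpleGraph V} (S : Sch V G p Δ) y, S.pos y < 2 ^ q :=
    fun S y => (S.pos_lt y).trans (hl S _)
  refine ⟨?_, ?_, ?_, ?_, ?_⟩
  · intro w hw
    have h1 := h w hw
    simp only [lab, Prod.mk.injEq] at h1
    obtain ⟨_, h1, _, _, h2⟩ := h1
    have h3 := congrFun h2 (S₂.lv w)
    simp only [Prod.mk.injEq] at h3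
    simp only [gam, h1, h3.1]
  · intro w hw
    have h1 := h w hw
    simp only [lab, Prod.mk.injEq] at h1
    exact ofNat_inj (hlp _ _) (hlp _ _) h1.2.2.1
  · intro Γ
    constructor
    · rintro ⟨w, hw, hm⟩
      exact ⟨w, hw, (labJ_of_lab (h w hw) hm).2⟩
    · rintro ⟨w, hw, hm⟩
      exact ⟨w, hw, (labJ_of_lab (h w hw).symm hm).2⟩
  · rintro Γ ⟨w, hw, hm⟩
    have h1 := (labJ_of_lab (h w hw) hm).1
    simp only [labJ, Prod.mk.injEq] at h1
    exact ofNat_inj (hl _ _) (hl _ _) h1.1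
  · intro Γ _ w hw i
    constructor
    · intro hi
      have hm := S₁.lst_mem Γ w (List.mem_of_getElem? hi)
      exact (labJ_pos hq (labJ_of_lab (h w hw) hm).1 hi).1
    · intro hi
      have hm := S₂.lst_mem Γ w (List.mem_of_getElem? hi)
      exact (labJ_pos hq (labJ_of_lab (h w hw).symm hm).1 hi).1

theorem agreeS (hq : Fintype.card V * Δ < 2 ^ q) {Fs : Finset V}
    (h : ∀ w ∈ Fs, S₁.lab ω₁ q w = S₂.lab ω₂ q w) (r : Fin R) :
    AgrS S₁ S₂ Fs (oW (ω₁ r)) (oW (ω₂ r)) (oS (ω₁ r)) (oS (ω₂ r)) (ω₁ r).2 (ω₂ r).2 := by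
  have hl : ∀ {G : SimpleGraph V} (S : Sch V G p Δ) Γ, (S.lst Γ).length < 2 ^ q :=
    fun S Γ => (S.lst_len Γ).trans_lt hq
  have hlp : ∀ {G : SimpleGraph V} (S : Sch V G p Δ) y, S.pos y < 2 ^ q :=
    fun S y => (S.pos_lt y).trans (hl S _)
  refine ⟨?_, ?_, ?_, ?_, ?_, ?_⟩
  · intro w hw
    have h1 := h w hw
    simp only [lab, Prod.mk.injEq] at h1
    simpa using congrFun h1.2.2.2.1 r
  · rintro Γ ⟨w, hw, hm⟩
    have h1 := (labJ_of_lab (h w hw) hm).1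
    simp only [labJ, Prod.mk.injEq] at h1
    simpa using congrFun h1.2.2.2.1 r
  · rintro Γ ⟨w, hw, hm⟩
    have h1 := (labJ_of_lab (h w hw) hm).1
    simp only [labJ, Prod.mk.injEq] at h1
    have h2 := congrFun h1.2.2.1 r
    simp only [loc, Option.map_map] at h2 ⊢
    cases e1 : S₁.bt (oW (ω₁ r)) Γ with
    | none =>
      cases e2 : S₂.bt (oW (ω₂ r)) Γ with
      | none => rfl
      | some z => simp [e1, e2] at h2
    | some y =>
      cases e2 : S₂.bt (oW (ω₂ r)) Γ with
      | none => simp [e1, e2] at h2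
      | some z =>
        simp only [e1, e2, Option.map_some, Function.comp, Option.some.injEq, Prod.mk.injEq] at h2 ⊢
        exact ⟨h2.1, ofNat_inj (hlp _ _) (hlp _ _) h2.2⟩
  · rintro Γ ⟨w, hw, hm⟩
    have h1 := (labJ_of_lab (h w hw) hm).1
    simp only [labJ, Prod.mk.injEq] at h1
    exact congrFun h1.2.1 r
  · intro Γ _ w hw i hi
    have hm := S₁.lst_mem Γ w (List.mem_of_getElem? hi)
    exact (labJ_pos hq (labJ_of_lab (h w hw) hm).1 hi).2.1 r
  · intro Γ _ w hw i hi
    have hm := S₁.lst_mem Γ w (List.mem_of_getElem? hi)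
    exact (labJ_pos hq (labJ_of_lab (h w hw) hm).1 hi).2.2 r
end
end Sch

theorem bound_k (f p : ℕ) (hf : 1 ≤ f) (hp : 1 ≤ p) :
    (f+2) * p + ((f+2) * 1 + (f+2) * (p * (1 + (2*p+60) * (1 + 1)))) ≤ 381 * f * p^2 := by
  have h1 : f + 2 ≤ 3 * f := by omega
  have h2 : p + (1 + p * (1 + (2*p+60) * (1 + 1))) ≤ 127 * p^2 := by nlinarith
  calc _ = (f+2) * (p + (1 + p * (1 + (2*p+60) * (1 + 1)))) := by ring
    _ ≤ (3 * f) * (127 * p^2) := Nat.mul_le_mul h1 h2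
    _ = _ := by ring

theorem bound_b (p R : ℕ) (hp : 1 ≤ p) (hR : p ≤ R) :
    (p + (p + ((2*p+6) + (R * 1 + p * (p + ((2*p+6) + (R * 1 + (R * (((p + p) + (2*p+6)) + 1) +
      (R * 1 + (2*p+60) * (((2*p+6) + (R * 1 + R * 1)) + 1)))))))))) ≤ 715 * p^2 * R := by
  have h1 : (2*p+60) * (((2*p+6) + (R * 1 + R * 1)) + 1) ≤ (62 * p) * (11 * R) :=
    Nat.mul_le_mul (by omega) (by omega)
  have h2 : R * (((p + p) + (2*p+6)) + 1) ≤ R * (11 * p) := Nat.mul_le_mul_left _ (by omega)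
  have h3 : p + ((2*p+6) + (R * 1 + (R * (((p + p) + (2*p+6)) + 1) +
      (R * 1 + (2*p+60) * (((2*p+6) + (R * 1 + R * 1)) + 1))))) ≤ 704 * p * R := by
    nlinarith
  have h4 := Nat.mul_le_mul_left p h3
  have h5 : R ≤ p^2 * R := Nat.le_mul_of_pos_left _ (by positivity)
  nlinarith

set_option synthInstance.maxSize 1000 in
set_option synthInstance.maxHeartbeats 200000 in
theorem main {V : Type} [Fintype V] (n f : ℕ) (hcard : Fintype.card V = n) (hf : 1 ≤ f) (p : ℕ) (hp : 1 ≤ p) (hnp : n < 2 ^ p) :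
    ∃ D : (Fin (1882932480 * f^4 * p^7) → Bool) → (Fin (1882932480 * f^4 * p^7) → Bool) →
      Finset (Fin (1882932480 * f^4 * p^7) → Bool) → Bool,
      ∀ G : SimpleGraph V,
        ∃ LV : V → Fin (1882932480 * f^4 * p^7) → Bool,
          ∀ (s t : V) (F : Finset V) (_ : s ∉ F) (_ : t ∉ F), F.card ≤ f →
            (D (LV s) (LV t) (F.image LV) = true ↔ (rs G F).Reachable s t) := by
  generalize hb : 1882932480 * f^4 * p^7 = b
  set R := (2 * (2 * (2 * (6 * f * p)) ^ 3)) * (381 * f * p^2) with hR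
  have hpR : p ≤ R := by
    have : R = 2633472 * f^4 * p^4 * p := by rw [hR]; ring
    rw [this]
    exact Nat.le_mul_of_pos_left _ (by positivity)
  have hex : ∀ G : SimpleGraph V, ∃ (S : Sch V G p (2*p+60))
      (ω : Fin R → Sch.Om V p (2 * (6 * f * p))), ∀ x : Sch.Inst S f, ∃ r,
      S.good ((univ.filter (fun i => x.mask i = true)).image x.φ) (univ.image x.φ)
        (S.avec x.α) (ω r) := by
    intro G
    obtain ⟨S⟩ := exists_Sch G p (by rw [hcard]; exact hnp)
    refine ⟨S, S.seeds f (6 * f * p) (381 * f * p^2) (by rw [hcard]; exact hnp.le) ?_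
      (bound_k f p hf hp)⟩
    calc (f+2) * (p+1) ≤ (3 * f) * (2 * p) := Nat.mul_le_mul (by omega) (by omega)
      _ = 6 * f * p := by ring
  choose S ω hω using hex
  have hq : Fintype.card V * (2*p+60) < 2 ^ (2*p+6) := by
    rw [hcard]
    have h1 : 2 * p + 60 ≤ 2 ^ (p+6) := by
      rw [pow_add]
      have := Nat.lt_two_pow_self (n := p)
      omega
    calc n * (2*p+60) < 2^p * (2*p+60) := Nat.mul_lt_mul_of_pos_right hnp (by omega)
      _ ≤ 2^p * 2^(p+6) := Nat.mul_le_mul_left _ h1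
      _ = _ := by rw [← pow_add]; congr 1; ring
  have hbits : Bt (Sch.Lab V p (2*p+60) (2*p+6) R) b := by
    refine (Sch.lab_bits (2*p+6) (by rw [hcard]; exact hnp.le)).mono ?_
    refine (bound_b p R hp hpR).trans (le_of_eq ?_)
    rw [← hb, hR]
    ring
  obtain ⟨enc⟩ : Nonempty (Sch.Lab V p (2*p+60) (2*p+6) R ↪ (Fin b → Bool)) := by
    apply Function.Embedding.nonempty_of_card_le
    rw [Fintype.card_fun, Fintype.card_bool, Fintype.card_fin]
    exact hbits
  set LV : SimpleGraph V → V → Fin b → Bool :=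
    fun G w => enc ((S G).lab (ω G) (2*p+6) w) with hLV
  have hid : ∀ G G' w w', LV G w = LV G' w' → w = w' := by
    intro G G' w w' h
    have := enc.injective h
    simp only [Sch.lab, Prod.mk.injEq] at this
    exact this.1
  refine ⟨fun ls lt LF => decide (∃ (G : SimpleGraph V) (s t : V) (F : Finset V),
    LV G s = ls ∧ LV G t = lt ∧ F.image (LV G) = LF ∧ (rs G F).Reachable s t), fun G =>
    ⟨LV G, ?_⟩⟩
  intro s t F hs ht hc
  rw [decide_eq_true_eq]
  constructor
  · rintro ⟨G', s', t', F', h1, h2, h3, h4⟩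
    have e1 := hid _ _ _ _ h1
    have e2 := hid _ _ _ _ h2
    subst e1 e2
    have e3 : F' = F := by
      ext x
      constructor
      · intro hx
        have : LV G' x ∈ F.image (LV G) := by
          rw [← h3]; exact mem_image_of_mem _ hx
        obtain ⟨y, hy, hxy⟩ := mem_image.1 this
        rwa [← hid _ _ _ _ hxy]
      · intro hx
        have : LV G x ∈ F'.image (LV G') := by
          rw [h3]; exact mem_image_of_mem _ hx
        obtain ⟨y, hy, hxy⟩ := mem_image.1 this
        rwa [← hid _ _ _ _ hxy]
    subst e3
    have hall : ∀ w ∈ insert s' (insert t' F'),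
        (S G).lab (ω G) (2*p+6) w = (S G').lab (ω G') (2*p+6) w := by
      intro w hw
      simp only [mem_insert] at hw
      rcases hw with rfl | rfl | hw
      · exact (enc.injective h1).symm
      · exact (enc.injective h2).symm
      · have : LV G' w ∈ F'.image (LV G) := by
          rw [← h3]; exact mem_image_of_mem _ hw
        obtain ⟨y, hy, hxy⟩ := mem_image.1 this
        have := hid _ _ _ _ hxy
        subst this
        exact enc.injective hxy
    exact Sch.core (ω G) (ω G') s' t' F' hs ht hc (hω G') (Sch.agree hq hall)
      (fun r => Sch.agreeS hq hall r) h4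
  · intro h
    exact ⟨G, s, t, F, rfl, rfl, by congr, h⟩

end VF

theorem stmt_4 :
    ∃ C : ℝ, ∀ n f : ℕ, 2 ≤ n → 1 ≤ f →
      ∃ b : ℕ,
        (b : ℝ) ≤ C * (f : ℝ) ^ 4 * (Real.logb 2 n) ^ 7 ∧
        ∃ D : (Fin b → Bool) → (Fin b → Bool) → Finset (Fin b → Bool) → Bool,
          ∀ G : SimpleGraph (Fin n),
            ∃ LV : Fin n → Fin b → Bool,
              ∀ (s t : Fin n) (F : Finset (Fin n)) (hs : s ∉ F) (ht : t ∉ F),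
                F.card ≤ f →
                (D (LV s) (LV t) (F.image LV) = true ↔
                  (G.induce ((↑F : Set (Fin n))ᶜ)).Reachable
                    ⟨s, by simpa using hs⟩ ⟨t, by simpa using ht⟩) := by
  refine ⟨1882932480 * 128, fun n f hn hf => ?_⟩
  have hnp : n < 2 ^ (Nat.log 2 n + 1) := Nat.lt_pow_succ_log_self (by norm_num) n
  refine ⟨1882932480 * f^4 * (Nat.log 2 n + 1)^7, ?_, ?_⟩
  · have h1 : (1:ℝ) ≤ Real.logb 2 n := by
      rw [Real.le_logb_iff_rpow_le (by norm_num) (by positivity)]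
      simpa using (by exact_mod_cast hn : (2:ℝ) ≤ n)
    have h2 : ((Nat.log 2 n : ℕ) : ℝ) ≤ Real.logb 2 n := by
      rw [Real.le_logb_iff_rpow_le (by norm_num) (by positivity), Real.rpow_natCast]
      exact_mod_cast Nat.pow_log_le_self 2 (by omega)
    have h3 : ((Nat.log 2 n : ℕ) : ℝ) + 1 ≤ 2 * Real.logb 2 n := by linarith
    have h4 : (((Nat.log 2 n : ℕ) : ℝ) + 1)^7 ≤ (2 * Real.logb 2 n)^7 :=
      pow_le_pow_left₀ (by positivity) h3 7
    push_cast
    calc (1882932480:ℝ) * f^4 * ((Nat.log 2 n : ℕ) + 1)^7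
        ≤ 1882932480 * f^4 * (2 * Real.logb 2 n)^7 := by gcongr
      _ = _ := by ring
  · obtain ⟨D, hD⟩ := VF.main (V := Fin n) n f (Fintype.card_fin n) hf (Nat.log 2 n + 1) (by omega) hnp
    refine ⟨D, fun G => ?_⟩
    obtain ⟨LV, hLV⟩ := hD G
    refine ⟨LV, fun s t F hs ht hc => ?_⟩
    rw [← VF.rs_reach]
    rw [← hLV s t F hs ht hc]
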